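/- arXiv:1306.0852 — 14 statements merged into one kernel-verified Lean document; each statement's English description precedes it below -/
import Mathlib

section
/- Let f : I → ℝ be a differentiable function on an interval I ⊆ (0,∞), and let a, b ∈ I with 0 < a < b, with f' Lebesgue integrable on [a,b]. Then (b²·f(b) − a²·f(a))/2 − ∫_a^b x·f(x) dx = ((ln b − ln a)/2) · ∫_0^1 a^{3(1−t)} · b^{3t} · f'(a^{1−t} b^{t}) dt. -/
open Real MeasureTheory Set

/-- The logarithmic mean `L(x,y) = (y - x)/(ln y - ln x)`. -/
noncomputable def L (x y : ℝ) : ℝ := (y - x) / (Real.log y - Real.log x)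

/-- `G(α,ℓ) = ∫_0^1 t^α a^{ℓ(1-t)} b^{ℓ t} dt` (for parameters `a, b`). -/
noncomputable def G (a b α ℓ : ℝ) : ℝ :=
  ∫ t in (0:ℝ)..1, t ^ α * a ^ (ℓ * (1 - t)) * b ^ (ℓ * t)

/-- A function `h` is `(α,m)`-GA-convex on `[0,c]` if
`h(x^λ y^{m(1-λ)}) ≤ λ^α h(x) + m(1-λ^α) h(y)` for all `x, y ∈ [0,c]`, `λ ∈ [0,1]`. -/
def GAConvexOn (α m c : ℝ) (h : ℝ → ℝ) : Prop :=
  ∀ x ∈ Icc (0:ℝ) c, ∀ y ∈ Icc (0:ℝ) c, ∀ l ∈ Icc (0:ℝ) 1,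
    h (x ^ l * y ^ (m * (1 - l))) ≤ l ^ α * h x + m * (1 - l ^ α) * h y

/-- A function `h` is `(α,m)`-GA-concave on `[0,c]` if
`h(x^λ y^{m(1-λ)}) ≥ λ^α h(x) + m(1-λ^α) h(y)` for all `x, y ∈ [0,c]`, `λ ∈ [0,1]`. -/
def GAConcaveOn (α m c : ℝ) (h : ℝ → ℝ) : Prop :=
  ∀ x ∈ Icc (0:ℝ) c, ∀ y ∈ Icc (0:ℝ) c, ∀ l ∈ Icc (0:ℝ) 1,
    l ^ α * h x + m * (1 - l ^ α) * h y ≤ h (x ^ l * y ^ (m * (1 - l)))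

theorem stmt_0 (I : Set ℝ) (f f' : ℝ → ℝ) (a b : ℝ)
    (hI : I ⊆ Set.Ioi (0:ℝ)) (hIconv : Convex ℝ I)
    (haI : a ∈ I) (hbI : b ∈ I) (ha : 0 < a) (hab : a < b)
    (hderiv : ∀ x ∈ I, HasDerivWithinAt f (f' x) I x)
    (hint : IntervalIntegrable f' volume a b) :
    (b ^ 2 * f b - a ^ 2 * f a) / 2 - ∫ x in a..b, x * f x =
      ((Real.log b - Real.log a) / 2) *
        ∫ t in (0:ℝ)..1, a ^ (3 * (1 - t)) * b ^ (3 * t) * f' (a ^ (1 - t) * b ^ t) := by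
  have hsub : Icc a b ⊆ I := hIconv.ordConnected.out haI hbI
  have hb : 0 < b := ha.trans hab
  have hc : 0 < Real.log b - Real.log a := sub_pos.2 (Real.log_lt_log ha hab)
  have hfc : ContinuousOn f (Icc a b) := fun x hx =>
    ((hderiv x (hsub hx)).continuousWithinAt).mono hsub
  have hf : ∀ x ∈ Ioo a b, HasDerivAt f (f' x) x := fun x hx =>
    (hderiv x (hsub (Ioo_subset_Icc_self hx))).hasDerivAt
      (Filter.mem_of_superset (Icc_mem_nhds hx.1 hx.2) hsub)
  have hI1 : IntervalIntegrable (fun x => x * f x) volume a b := by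
    apply ContinuousOn.intervalIntegrable
    rw [uIcc_of_le hab.le]
    exact continuousOn_id.mul hfc
  have hI2 : IntervalIntegrable (fun x => x ^ 2 * f' x) volume a b :=
    hint.continuousOn_mul (by fun_prop)
  have key : ∫ x in a..b, (2 * (x * f x) + x ^ 2 * f' x) = b ^ 2 * f b - a ^ 2 * f a := by
    apply intervalIntegral.integral_eq_sub_of_hasDerivAt_of_le
      (f := fun x => x ^ 2 * f x) hab.le
    · exact (continuousOn_id.pow 2).mul hfc
    · intro x hx
      refine ((hasDerivAt_pow 2 x).fun_mul (hf x hx)).congr_deriv ?_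
      push_cast
      ring
    · exact (hI1.const_mul 2).add hI2
  rw [intervalIntegral.integral_add (hI1.const_mul 2) hI2,
    intervalIntegral.integral_const_mul] at key
  set c := Real.log b - Real.log a with hcdef
  have hphi : ∀ t : ℝ, a ^ (1 - t) * b ^ t = Real.exp (Real.log a + c * t) := by
    intro t
    rw [Real.rpow_def_of_pos ha, Real.rpow_def_of_pos hb, ← Real.exp_add]
    congr 1
    rw [hcdef]; ring
  have hphi3 : ∀ t : ℝ, a ^ (3 * (1 - t)) * b ^ (3 * t)
      = Real.exp (Real.log a + c * t) ^ 3 := by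
    intro t
    rw [Real.rpow_def_of_pos ha, Real.rpow_def_of_pos hb, ← Real.exp_add, ← Real.exp_nat_mul]
    congr 1
    rw [hcdef]; push_cast; ring
  have himg : (fun t : ℝ => Real.exp (Real.log a + c * t)) '' Icc 0 1 = Icc a b := by
    ext x
    constructor
    · rintro ⟨t, ht, rfl⟩
      constructor
      · calc a = Real.exp (Real.log a) := (Real.exp_log ha).symm
          _ ≤ _ := Real.exp_le_exp.2 (by nlinarith [ht.1])
      · calc _ ≤ Real.exp (Real.log b) := Real.exp_le_exp.2 (by nlinarith [ht.2])
          _ = b := Real.exp_log hb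
    · intro hx
      have hx0 : 0 < x := ha.trans_le hx.1
      have h1 := Real.log_le_log ha hx.1
      have h2 := Real.log_le_log hx0 hx.2
      refine ⟨(Real.log x - Real.log a) / c, ⟨by apply div_nonneg <;> linarith, ?_⟩, ?_⟩
      · rw [div_le_one hc]; linarith
      · show Real.exp (Real.log a + c * ((Real.log x - Real.log a) / c)) = x
        rw [mul_div_cancel₀ _ hc.ne']
        rw [add_sub_cancel, Real.exp_log hx0]
  have hinj : InjOn (fun t : ℝ => Real.exp (Real.log a + c * t)) (Icc 0 1) := by
    intro s _ t _ h
    have h' := Real.exp_injective h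
    exact mul_left_cancel₀ hc.ne' (add_left_cancel h')
  have hcv := integral_image_eq_integral_abs_deriv_smul (s := Icc (0:ℝ) 1)
    (f := fun t : ℝ => Real.exp (Real.log a + c * t))
    (f' := fun t : ℝ => Real.exp (Real.log a + c * t) * c) measurableSet_Icc
    (fun t _ => by
      have := ((((hasDerivAt_id t).const_mul c).const_add (Real.log a)).exp).hasDerivWithinAt
        (s := Icc (0:ℝ) 1)
      simpa using this) hinj (fun x => x ^ 2 * f' x)
  rw [himg, integral_Icc_eq_integral_Ioc, integral_Icc_eq_integral_Ioc,
    ← intervalIntegral.integral_of_le hab.le, ← intervalIntegral.integral_of_le zero_le_one] at hcv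
  have hfin : ∫ x in a..b, x ^ 2 * f' x = c *
      ∫ t in (0:ℝ)..1, a ^ (3 * (1 - t)) * b ^ (3 * t) * f' (a ^ (1 - t) * b ^ t) := by
    rw [hcv, ← intervalIntegral.integral_const_mul]
    congr 1
    ext t
    rw [hphi3, hphi, abs_of_pos (mul_pos (Real.exp_pos _) hc), smul_eq_mul]
    ring
  rw [hfin] at key
  linarith
end

section
/- Let f : [0,∞) → ℝ be differentiable with f' Lebesgue integrable on [a,b], where 0 < a < b < ∞. Let (α,m) ∈ (0,1]² and q ≥ 1. If |f'|^q is (α,m)-GA-convex on [0, max{a^{1/m}, b}], then |(b²·f(b) − a²·f(a))/2 − ∫_a^b x·f(x) dx| ≤ ((ln b − ln a)/2) · [L(a³,b³)]^{1−1/q} · { m·[L(a³,b³) − G(α,3)]·|f'(a^{1/m})|^q + G(α,3)·|f'(b)|^q }^{1/q}. -/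
open Real MeasureTheory Set

lemma aux_holder (a b q C : ℝ) (ha : 0 < a) (hab : a < b) (hq : 1 ≤ q) (g : ℝ → ℝ)
    (hg0 : ∀ x, 0 ≤ g x) (hgC : ∀ x ∈ Icc a b, g x ≤ C)
    (hgm : AEStronglyMeasurable g (volume.restrict (Ioc a b))) :
    ∫ x in a..b, x ^ 2 * g x ≤
      (∫ x in a..b, x ^ 2) ^ (1 - 1/q) * (∫ x in a..b, x ^ 2 * g x ^ q) ^ (1/q) := by
  rcases eq_or_lt_of_le hq with rfl | hq1
  · simp
  have hq0 : 0 < q := by linarith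
  have hpq : (q / (q - 1)).HolderConjugate q := (Real.HolderConjugate.conjExponent hq1).symm
  have hC : 0 ≤ C := (hg0 a).trans (hgC a ⟨le_rfl, hab.le⟩)
  rw [intervalIntegral.integral_of_le hab.le, intervalIntegral.integral_of_le hab.le,
    intervalIntegral.integral_of_le hab.le]
  have h1q : 0 < 1 - 1/q := by
    rw [sub_pos, div_lt_one hq0]; exact hq1
  have hF : MemLp (fun x : ℝ => (x ^ 2) ^ (1 - 1/q)) (ENNReal.ofReal (q / (q - 1)))
      (volume.restrict (Ioc a b)) := by
    refine MemLp.of_bound ?_ ((b ^ 2) ^ (1 - 1/q)) ?_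
    · exact (by fun_prop : Measurable fun x : ℝ => (x ^ 2) ^ (1 - 1/q)).aestronglyMeasurable
    · filter_upwards [ae_restrict_mem measurableSet_Ioc] with x hx
      have hx0 : 0 < x := ha.trans hx.1
      rw [Real.norm_of_nonneg (by positivity)]
      have := hx.2
      gcongr
  have hH : MemLp (fun x : ℝ => (x ^ 2) ^ (1/q) * g x) (ENNReal.ofReal q)
      (volume.restrict (Ioc a b)) := by
    refine MemLp.of_bound ?_ ((b ^ 2) ^ (1/q) * C) ?_
    · exact (by fun_prop : Measurable fun x : ℝ => (x ^ 2) ^ (1/q)).aestronglyMeasurable.mul hgm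
    · filter_upwards [ae_restrict_mem measurableSet_Ioc] with x hx
      have hx0 : 0 < x := ha.trans hx.1
      rw [Real.norm_of_nonneg (mul_nonneg (by positivity) (hg0 x))]
      have := hx.2
      have h3 := hgC x ⟨hx.1.le, hx.2⟩
      have h4 := hg0 x
      gcongr
  have key := integral_mul_le_Lp_mul_Lq_of_nonneg hpq
    (Filter.Eventually.of_forall fun x : ℝ => by positivity)
    (Filter.Eventually.of_forall fun x : ℝ => mul_nonneg (by positivity) (hg0 x)) hF hH
  have e1 : ∀ x : ℝ, (x ^ 2) ^ (1 - 1/q) * ((x ^ 2) ^ (1/q) * g x) = x ^ 2 * g x := by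
    intro x
    rw [← mul_assoc, ← Real.rpow_add_of_nonneg (by positivity) h1q.le (by positivity)]
    simp
  have e2 : ∀ x : ℝ, ((x ^ 2) ^ (1 - 1/q)) ^ (q / (q - 1)) = x ^ 2 := by
    intro x
    rw [← Real.rpow_mul (by positivity)]
    have : (1 - 1/q) * (q / (q - 1)) = 1 := by
      have : q - 1 ≠ 0 := by linarith
      field_simp
    rw [this, Real.rpow_one]
  have e3 : ∀ x : ℝ, ((x ^ 2) ^ (1/q) * g x) ^ q = x ^ 2 * g x ^ q := by
    intro x
    rw [Real.mul_rpow (by positivity) (hg0 x), ← Real.rpow_mul (by positivity)]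
    have : 1 / q * q = 1 := by field_simp
    rw [this, Real.rpow_one]
  have e4 : 1 / (q / (q - 1)) = 1 - 1/q := by
    have : q - 1 ≠ 0 := by linarith
    field_simp
  simp only [e1, e2, e3, e4] at key
  exact key

lemma aux_cont (a b α : ℝ) (ha : 0 < a) (hα : 0 < α) :
    ContinuousOn (fun x : ℝ => ((log x - log a) / (log b - log a)) ^ α) (Ici a) := by
  apply ContinuousOn.rpow_const
  · apply ContinuousOn.div_const
    apply ContinuousOn.sub _ continuousOn_const
    exact continuousOn_log.mono fun x (hx : a ≤ x) => (ha.trans_le hx).ne'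
  · intro x _
    right; exact hα.le

lemma aux_G (a b α : ℝ) (ha : 0 < a) (hab : a < b) (hα : 0 < α) :
    ∫ x in a..b, x ^ 2 * ((log x - log a) / (log b - log a)) ^ α =
      (log b - log a) * G a b α 3 := by
  have hb : 0 < b := ha.trans hab
  have hΛ : 0 < log b - log a := sub_pos.2 (log_lt_log ha hab)
  set Λ := log b - log a with hΛd
  have hd : ∀ t : ℝ, HasDerivAt (fun t => exp (log a + Λ * t)) (exp (log a + Λ * t) * Λ) t := by
    intro t
    have : HasDerivAt (fun t => log a + Λ * t) Λ t := by
      simpa using ((hasDerivAt_id t).const_mul Λ).const_add (log a)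
    exact this.exp
  have h := intervalIntegral.integral_comp_mul_deriv'' (a := 0) (b := 1)
    (f := fun t => exp (log a + Λ * t)) (f' := fun t => exp (log a + Λ * t) * Λ)
    (g := fun x => x ^ 2 * ((log x - log a) / Λ) ^ α) (by fun_prop)
    (fun t _ => (hd t).hasDerivWithinAt) (by fun_prop) (by
      apply ContinuousOn.mul (by fun_prop)
      refine (aux_cont a b α ha hα).mono ?_
      rintro _ ⟨t, ht, rfl⟩
      rw [uIcc_of_le zero_le_one] at ht
      show a ≤ exp (log a + Λ * t)
      rw [← Real.log_le_iff_le_exp ha]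
      have := mul_nonneg hΛ.le ht.1
      linarith)
  have e0 : exp (log a + Λ * 0) = a := by simp [exp_log ha]
  have e1 : exp (log a + Λ * 1) = b := by simp [hΛd, exp_log hb]
  simp only [e0, e1] at h
  rw [← h, G, ← intervalIntegral.integral_const_mul]
  congr 1
  ext t
  simp only [Function.comp, log_exp]
  rw [Real.rpow_def_of_pos ha, Real.rpow_def_of_pos hb]
  have h1 : (log a + Λ * t - log a) / Λ = t := by field_simp; ring
  have h2 : exp (log a * (3 * (1 - t))) * exp (log b * (3 * t)) = exp (log a + Λ * t) ^ 3 := by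
    rw [← exp_add, ← exp_nat_mul]
    congr 1
    push_cast
    rw [hΛd]; ring
  rw [h1, mul_assoc (t ^ α), h2]
  ring

theorem stmt_1 (f f' : ℝ → ℝ) (a b α m q : ℝ) (ha : 0 < a) (hab : a < b)
    (hα : α ∈ Ioc (0:ℝ) 1) (hm : m ∈ Ioc (0:ℝ) 1) (hq : 1 ≤ q)
    (hderiv : ∀ x ∈ Ici (0:ℝ), HasDerivAt f (f' x) x)
    (hint : IntervalIntegrable f' volume a b)
    (hconv : GAConvexOn α m (max (a ^ (1/m)) b) (fun x => |f' x| ^ q)) :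
    |(b ^ 2 * f b - a ^ 2 * f a) / 2 - ∫ x in a..b, x * f x| ≤
      ((Real.log b - Real.log a) / 2) * L (a ^ 3) (b ^ 3) ^ (1 - 1/q) *
        (m * (L (a ^ 3) (b ^ 3) - G a b α 3) * |f' (a ^ (1/m))| ^ q +
          G a b α 3 * |f' b| ^ q) ^ (1/q) := by
  have hb : 0 < b := ha.trans hab
  have hq0 : 0 < q := by linarith
  have hm0 : 0 < m := hm.1
  have hΛ : 0 < log b - log a := sub_pos.2 (log_lt_log ha hab)
  have hL : ∫ x in a..b, x ^ 2 = (log b - log a) * L (a ^ 3) (b ^ 3) := by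
    rw [integral_pow, L, Real.log_pow, Real.log_pow]
    have : (3:ℕ) * log b - (3:ℕ) * log a ≠ 0 := by push_cast; linarith
    field_simp
    push_cast
    ring
  have hG := aux_G a b α ha hab hα.1
  set A := |f' (a ^ (1/m))| ^ q with hA
  set B := |f' b| ^ q with hB
  have hA0 : 0 ≤ A := by positivity
  have hB0 : 0 ≤ B := by positivity
  set T : ℝ → ℝ := fun x => ((log x - log a) / (log b - log a)) ^ α with hT
  have ht01 : ∀ x ∈ Icc a b, (log x - log a) / (log b - log a) ∈ Icc (0:ℝ) 1 := by
    intro x hx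
    have h1 := log_le_log ha hx.1
    have h2 := log_le_log (ha.trans_le hx.1) hx.2
    exact ⟨div_nonneg (by linarith) hΛ.le, (div_le_one hΛ).2 (by linarith)⟩
  have hT01 : ∀ x ∈ Icc a b, 0 ≤ T x ∧ T x ≤ 1 := fun x hx =>
    ⟨Real.rpow_nonneg (ht01 x hx).1 _, Real.rpow_le_one (ht01 x hx).1 (ht01 x hx).2 hα.1.le⟩
  -- pointwise bound
  have hpt : ∀ x ∈ Icc a b, |f' x| ^ q ≤ T x * B + m * (1 - T x) * A := by
    intro x hx
    have hx0 : 0 < x := ha.trans_le hx.1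
    have h := hconv b ⟨hb.le, le_max_right _ _⟩ (a ^ (1/m)) ⟨by positivity, le_max_left _ _⟩
      _ (ht01 x hx)
    have e : b ^ ((log x - log a) / (log b - log a)) *
        (a ^ (1/m)) ^ (m * (1 - (log x - log a) / (log b - log a))) = x := by
      rw [← Real.rpow_mul ha.le, Real.rpow_def_of_pos ha, Real.rpow_def_of_pos hb, ← exp_add]
      conv_rhs => rw [← exp_log hx0]
      congr 1
      have := hΛ.ne'
      field_simp
      ring
    rw [e] at h
    exact h
  have hbd : ∀ x ∈ Icc a b, |f' x| ^ q ≤ B + m * A := by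
    intro x hx
    obtain ⟨h0, h1⟩ := hT01 x hx
    have := hpt x hx
    nlinarith [mul_nonneg hm0.le hA0, mul_nonneg (mul_nonneg hm0.le hA0) h0,
      mul_nonneg (sub_nonneg.2 h1) hB0]
  have hbd' : ∀ x ∈ Icc a b, |f' x| ≤ (B + m * A) ^ (1/q) := by
    intro x hx
    rw [one_div, Real.le_rpow_inv_iff_of_pos (abs_nonneg _) (by positivity) hq0]
    exact hbd x hx
  have hmeas : AEStronglyMeasurable f' (volume.restrict (Ioc a b)) := hint.1.aestronglyMeasurable
  have hgm : AEStronglyMeasurable (fun x => |f' x|) (volume.restrict (Ioc a b)) := hmeas.norm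
  -- integration by parts
  have hIBP : (b ^ 2 * f b - a ^ 2 * f a) / 2 - ∫ x in a..b, x * f x =
      (∫ x in a..b, x ^ 2 * f' x) / 2 := by
    have hu : ∀ x ∈ uIcc a b, HasDerivAt (fun x : ℝ => x ^ 2) (2 * x) x := fun x _ => by
      simpa using hasDerivAt_pow 2 x
    have h := intervalIntegral.integral_mul_deriv_eq_deriv_mul hu
      (v := f) (v' := f') (fun x hx => hderiv x (by
        rw [uIcc_of_le hab.le] at hx
        exact ha.le.trans hx.1))
      ((by fun_prop : Continuous fun x : ℝ => 2 * x).intervalIntegrable _ _) hint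
    rw [h]
    simp only [mul_assoc, intervalIntegral.integral_const_mul]
    ring
  have hTc : ContinuousOn T (uIcc a b) := by
    rw [uIcc_of_le hab.le]
    exact (aux_cont a b α ha hα.1).mono Icc_subset_Ici_self
  have hI1 : IntervalIntegrable (fun x => x ^ 2 * |f' x|) volume a b :=
    hint.abs.continuousOn_mul (by fun_prop)
  have hI2 : IntervalIntegrable (fun x => |f' x| ^ q) volume a b := by
    rw [intervalIntegrable_iff_integrableOn_Ioc_of_le hab.le]
    refine Integrable.of_bound ?_ (B + m * A) ?_
    · exact (hgm.aemeasurable.pow_const q).aestronglyMeasurable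
    · filter_upwards [ae_restrict_mem measurableSet_Ioc] with x hx
      rw [Real.norm_of_nonneg (by positivity)]
      exact hbd x ⟨hx.1.le, hx.2⟩
  have hI3 : IntervalIntegrable (fun x => x ^ 2 * |f' x| ^ q) volume a b :=
    hI2.continuousOn_mul (by fun_prop)
  have hIT : IntervalIntegrable (fun x => x ^ 2 * T x) volume a b :=
    ContinuousOn.intervalIntegrable (ContinuousOn.mul (by fun_prop) hTc)
  have hIx : IntervalIntegrable (fun x : ℝ => x ^ 2) volume a b :=
    (by fun_prop : Continuous fun x : ℝ => x ^ 2).intervalIntegrable _ _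
  set R := m * (L (a ^ 3) (b ^ 3) - G a b α 3) * A + G a b α 3 * B with hR
  have hmain : ∫ x in a..b, x ^ 2 * |f' x| ^ q ≤ (log b - log a) * R := by
    have e : ∫ x in a..b, ((B - m * A) * (x ^ 2 * T x) + m * A * x ^ 2) =
        (log b - log a) * R := by
      rw [intervalIntegral.integral_add (hIT.const_mul _) (hIx.const_mul _),
        intervalIntegral.integral_const_mul, intervalIntegral.integral_const_mul, hL, hG, hR]
      ring
    rw [← e]
    apply intervalIntegral.integral_mono_on hab.le hI3
      ((hIT.const_mul _).add (hIx.const_mul _))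
    intro x hx
    have := mul_le_mul_of_nonneg_left (hpt x hx) (sq_nonneg x)
    calc _ ≤ _ := this
      _ = _ := by ring
  have hI3n : 0 ≤ ∫ x in a..b, x ^ 2 * |f' x| ^ q :=
    intervalIntegral.integral_nonneg hab.le fun x _ => by positivity
  have hRn : 0 ≤ R := by
    by_contra hc
    push Not at hc
    nlinarith
  have hLn : 0 ≤ L (a ^ 3) (b ^ 3) := by
    have : 0 ≤ ∫ x in a..b, x ^ 2 :=
      intervalIntegral.integral_nonneg hab.le fun x _ => by positivity
    rw [hL] at this
    exact nonneg_of_mul_nonneg_right this hΛ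
  have hH := aux_holder a b q _ ha hab hq (fun x => |f' x|) (fun x => abs_nonneg _) hbd' hgm
  have habs : |∫ x in a..b, x ^ 2 * f' x| ≤ ∫ x in a..b, x ^ 2 * |f' x| := by
    refine (intervalIntegral.abs_integral_le_integral_abs hab.le).trans (le_of_eq ?_)
    congr 1
    ext x
    rw [abs_mul, abs_of_nonneg (sq_nonneg x)]
  have hpow : ((log b - log a) * L (a ^ 3) (b ^ 3)) ^ (1 - 1/q) *
      ((log b - log a) * R) ^ (1/q) =
      (log b - log a) * L (a ^ 3) (b ^ 3) ^ (1 - 1/q) * R ^ (1/q) := by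
    rw [Real.mul_rpow hΛ.le hLn, Real.mul_rpow hΛ.le hRn]
    have : (log b - log a) ^ (1 - 1/q) * (log b - log a) ^ (1/q) = log b - log a := by
      rw [← Real.rpow_add hΛ]; simp
    calc _ = ((log b - log a) ^ (1 - 1/q) * (log b - log a) ^ (1/q)) *
          L (a ^ 3) (b ^ 3) ^ (1 - 1/q) * R ^ (1/q) := by ring
      _ = _ := by rw [this]
  have hfin : ∫ x in a..b, x ^ 2 * |f' x| ≤
      (log b - log a) * L (a ^ 3) (b ^ 3) ^ (1 - 1/q) * R ^ (1/q) := by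
    rw [← hpow]
    refine hH.trans ?_
    rw [hL]
    gcongr
  rw [hIBP, abs_div, abs_of_pos (by norm_num : (0:ℝ) < 2)]
  calc _ ≤ ((log b - log a) * L (a ^ 3) (b ^ 3) ^ (1 - 1/q) * R ^ (1/q)) / 2 := by
        have := habs.trans hfin
        linarith
    _ = _ := by ring
end

section
/- Let f : [0,∞) → ℝ be differentiable with f' Lebesgue integrable on [a,b], where 0 < a < b < ∞. Let (α,m) ∈ (0,1]². If |f'| is (α,m)-GA-convex on [0, max{a^{1/m}, b}], then |(b²·f(b) − a²·f(a))/2 − ∫_a^b x·f(x) dx| ≤ ((ln b − ln a)/2) · { m·[L(a³,b³) − G(α,3)]·|f'(a^{1/m})| + G(α,3)·|f'(b)| }. -/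
open Real MeasureTheory Set

theorem stmt_2 (f f' : ℝ → ℝ) (a b α m : ℝ) (ha : 0 < a) (hab : a < b)
    (hα : α ∈ Ioc (0:ℝ) 1) (hm : m ∈ Ioc (0:ℝ) 1)
    (hderiv : ∀ x ∈ Ici (0:ℝ), HasDerivAt f (f' x) x)
    (hint : IntervalIntegrable f' volume a b)
    (hconv : GAConvexOn α m (max (a ^ (1/m)) b) (fun x => |f' x|)) :
    |(b ^ 2 * f b - a ^ 2 * f a) / 2 - ∫ x in a..b, x * f x| ≤
      ((Real.log b - Real.log a) / 2) *
        (m * (L (a ^ 3) (b ^ 3) - G a b α 3) * |f' (a ^ (1/m))| +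
          G a b α 3 * |f' b|) := by
  obtain ⟨hα0, hα1⟩ := hα
  obtain ⟨hm0, hm1⟩ := hm
  have hb : 0 < b := ha.trans hab
  have hlog : Real.log a < Real.log b := Real.log_lt_log ha hab
  set D := Real.log b - Real.log a with hD
  have hD0 : 0 < D := by linarith
  set A := |f' (a ^ (1/m))| with hA
  set B := |f' b| with hB
  have hu : uIcc a b = Icc a b := uIcc_of_le hab.le
  -- integration by parts
  have ibp : (b ^ 2 * f b - a ^ 2 * f a) / 2 - ∫ x in a..b, x * f x
      = ∫ x in a..b, (x ^ 2 / 2) * f' x := by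
    have h := intervalIntegral.integral_mul_deriv_eq_deriv_mul (a := a) (b := b)
      (u := fun x => x ^ 2 / 2) (u' := fun x => x) (v := f) (v' := f')
      (fun x _ => by
        have := (hasDerivAt_pow 2 x).div_const 2
        convert this using 1
        simp)
      (fun x hx => hderiv x (by
        rw [hu] at hx
        exact ha.le.trans hx.1))
      (continuous_id.intervalIntegrable a b) hint
    rw [h]
    ring
  set g : ℝ → ℝ := fun x => (x ^ 2 / 2) * (((Real.log x - Real.log a) / D) ^ α * B
    + m * (1 - ((Real.log x - Real.log a) / D) ^ α) * A) with hg
  have hgc : ContinuousOn g (Icc a b) := by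
    have hl : ContinuousOn (fun x => ((Real.log x - Real.log a) / D) ^ α) (Icc a b) := by
      apply ContinuousOn.rpow_const
      · apply ContinuousOn.div_const
        apply ContinuousOn.sub _ continuousOn_const
        exact Real.continuousOn_log.mono (fun x hx => (ha.trans_le hx.1).ne')
      · intro x hx
        exact Or.inr hα0.le
    exact ((continuousOn_id.pow 2).div_const 2).mul ((hl.mul continuousOn_const).add
      ((continuousOn_const.mul (continuousOn_const.sub hl)).mul continuousOn_const))
  have key : ∀ x ∈ Icc a b, |(x ^ 2 / 2) * f' x| ≤ g x := by
    intro x hx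
    have hx0 : 0 < x := ha.trans_le hx.1
    have h1 : Real.log a ≤ Real.log x := Real.log_le_log ha hx.1
    have h2 : Real.log x ≤ Real.log b := Real.log_le_log hx0 hx.2
    set t := (Real.log x - Real.log a) / D with ht
    have htD : t * D = Real.log x - Real.log a := div_mul_cancel₀ _ hD0.ne'
    have ht0 : 0 ≤ t := div_nonneg (by linarith) hD0.le
    have ht1 : t ≤ 1 := (div_le_one hD0).2 (by linarith)
    have hap : 0 < a ^ (1/m) := Real.rpow_pos_of_pos ha _
    have h := hconv b ⟨hb.le, le_max_right _ _⟩ (a ^ (1/m)) ⟨hap.le, le_max_left _ _⟩ t ⟨ht0, ht1⟩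
    have hxe : b ^ t * (a ^ (1/m)) ^ (m * (1 - t)) = x := by
      rw [← Real.rpow_mul ha.le, ← mul_assoc, one_div_mul_cancel hm0.ne', one_mul,
        Real.rpow_def_of_pos hb, Real.rpow_def_of_pos ha, ← Real.exp_add]
      rw [show Real.log b * t + Real.log a * (1 - t) = Real.log x by
        rw [hD] at htD; linarith]
      exact Real.exp_log hx0
    rw [hxe] at h
    rw [abs_mul, abs_of_nonneg (by positivity : 0 ≤ x ^ 2 / 2)]
    exact mul_le_mul_of_nonneg_left h (by positivity)
  have bound : |∫ x in a..b, (x ^ 2 / 2) * f' x| ≤ ∫ x in a..b, g x := by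
    have := intervalIntegral.norm_integral_le_of_norm_le (μ := volume) (f := fun x => (x ^ 2 / 2) * f' x) hab.le
      (Filter.Eventually.of_forall (fun x hx => key x (Ioc_subset_Icc_self hx)))
      (ContinuousOn.intervalIntegrable (by rwa [hu]))
    exact this
  set φ : ℝ → ℝ := fun t => Real.exp (Real.log a + t * D) with hφ
  have hφd : ∀ t, HasDerivAt φ (φ t * D) t := by
    intro t
    have h := (((hasDerivAt_id t).mul_const D).const_add (Real.log a)).exp
    simpa using h
  have hφc : Continuous φ := by fun_prop
  have hφ0 : φ 0 = a := by simp [hφ, Real.exp_log ha]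
  have hφ1 : φ 1 = b := by simp [hφ, hD, Real.exp_log hb]
  have sub : ∫ x in a..b, g x = ∫ t in (0:ℝ)..1, (g ∘ φ) t * (φ t * D) := by
    rw [intervalIntegral.integral_comp_mul_deriv' (fun t _ => hφd t)
      (by fun_prop) ?_, hφ0, hφ1]
    apply hgc.mono
    rintro _ ⟨t, ht, rfl⟩
    rw [uIcc_of_le zero_le_one] at ht
    rw [← hφ0, ← hφ1]
    constructor
    · apply Real.exp_le_exp.2
      nlinarith [ht.1]
    · apply Real.exp_le_exp.2
      nlinarith [ht.2]
  have hGe : G a b α 3 = ∫ t in (0:ℝ)..1, t ^ α * φ t ^ 3 := by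
    unfold G
    congr 1
    ext t
    rw [mul_assoc, Real.rpow_def_of_pos hb, Real.rpow_def_of_pos ha, ← Real.exp_add, hφ]
    simp only
    rw [← Real.exp_nat_mul]
    congr 2
    rw [hD]; push_cast; ring
  have hLe : L (a ^ 3) (b ^ 3) = ∫ t in (0:ℝ)..1, φ t ^ 3 := by
    have h := intervalIntegral.integral_eq_sub_of_hasDerivAt (a := 0) (b := 1)
      (f := fun t => φ t ^ 3 / (3 * D)) (f' := fun t => φ t ^ 3)
      (fun t _ => by
        have := ((hφd t).pow 3).div_const (3 * D)
        have e : ((3:ℕ):ℝ) * φ t ^ (3 - 1) * (φ t * D) / (3 * D) = φ t ^ 3 := by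
          rw [div_eq_iff (by positivity)]
          push_cast
          ring
        rw [e] at this
        exact this)
      ((hφc.pow 3).intervalIntegrable _ _)
    rw [h, hφ0, hφ1]
    unfold L
    rw [Real.log_pow, Real.log_pow, ← sub_div]
    congr 1
    rw [hD]; push_cast; ring
  have hcα : Continuous (fun t : ℝ => t ^ α * φ t ^ 3) :=
    (Real.continuous_rpow_const hα0.le).mul (hφc.pow 3)
  have fin : ∫ t in (0:ℝ)..1, (g ∘ φ) t * (φ t * D) = (D / 2) *
        (m * (L (a ^ 3) (b ^ 3) - G a b α 3) * A + G a b α 3 * B) := by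
    have e : ∀ t, (g ∘ φ) t * (φ t * D) =
        (D / 2 * (m * A)) * φ t ^ 3 + (D / 2 * (B - m * A)) * (t ^ α * φ t ^ 3) := by
      intro t
      have : (Real.log (φ t) - Real.log a) / D = t := by
        rw [div_eq_iff hD0.ne']
        simp only [hφ, Real.log_exp]
        ring
      simp only [hg, Function.comp_apply, this]
      ring
    simp_rw [e]
    rw [intervalIntegral.integral_add, intervalIntegral.integral_const_mul,
      intervalIntegral.integral_const_mul, ← hGe, ← hLe]
    · ring
    · exact (continuous_const.mul (hφc.pow 3)).intervalIntegrable _ _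
    · exact (continuous_const.mul hcα).intervalIntegrable _ _
  rw [ibp, ← fin, ← sub]
  exact bound
end

section
/- Let f : [0,∞) → ℝ be differentiable with f' Lebesgue integrable on [a,b], where 0 < a < b < ∞. Let m ∈ (0,1] and q ≥ 1. If |f'|^q is (1,m)-GA-convex on [0, max{a^{1/m}, b}], then |(b²·f(b) − a²·f(a))/2 − ∫_a^b x·f(x) dx| ≤ ((b³ − a³)^{1−1/q}/6) · { m·[L(a³,b³) − a³]·|f'(a^{1/m})|^q + [b³ − L(a³,b³)]·|f'(b)|^q }^{1/q}. -/
open Real MeasureTheory Set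

lemma tangent_aux (q k u : ℝ) (hq : 1 ≤ q) (hk : 0 < k) (hu : 0 ≤ u) :
    k ^ q + q * k ^ (q - 1) * (u - k) ≤ u ^ q := by
  have h := one_add_mul_self_le_rpow_one_add (s := u / k - 1)
    (by have : 0 ≤ u / k := by positivity
        linarith) hq
  have e : 1 + (u / k - 1) = u / k := by ring
  rw [e, Real.div_rpow hu hk.le, le_div_iff₀ (by positivity)] at h
  have e2 : k ^ q = k ^ (q - 1) * k := by
    rw [← Real.rpow_add_one hk.ne']; congr 1; ring
  have e3 : (1 + q * (u / k - 1)) * k ^ q = k ^ q + q * k ^ (q - 1) * (u - k) := by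
    rw [e2]; field_simp
  linarith

theorem stmt_3 (f f' : ℝ → ℝ) (a b m q : ℝ) (ha : 0 < a) (hab : a < b)
    (hm : m ∈ Ioc (0:ℝ) 1) (hq : 1 ≤ q)
    (hderiv : ∀ x ∈ Ici (0:ℝ), HasDerivAt f (f' x) x)
    (hint : IntervalIntegrable f' volume a b)
    (hconv : GAConvexOn 1 m (max (a ^ (1/m)) b) (fun x => |f' x| ^ q)) :
    |(b ^ 2 * f b - a ^ 2 * f a) / 2 - ∫ x in a..b, x * f x| ≤
      ((b ^ 3 - a ^ 3) ^ (1 - 1/q) / 6) *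
        (m * (L (a ^ 3) (b ^ 3) - a ^ 3) * |f' (a ^ (1/m))| ^ q +
          (b ^ 3 - L (a ^ 3) (b ^ 3)) * |f' b| ^ q) ^ (1/q) := by
  obtain ⟨hm0, hm1⟩ := hm
  have hb : 0 < b := ha.trans hab
  have hq0 : 0 < q := by linarith
  have hlog : 0 < Real.log b - Real.log a := sub_pos.2 (Real.log_lt_log ha hab)
  set ℓ := Real.log b - Real.log a with hℓ
  set A := |f' b| ^ q with hA
  set B := |f' (a ^ (1/m))| ^ q with hB
  have hA0 : 0 ≤ A := by positivity
  have hB0 : 0 ≤ B := by positivity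
  have h3 : a ^ 3 < b ^ 3 := by gcongr
  have hfc : ContinuousOn f (uIcc a b) := fun x hx => by
    rw [uIcc_of_le hab.le] at hx
    exact (hderiv x (ha.le.trans hx.1)).continuousAt.continuousWithinAt
  have i1 : IntervalIntegrable (fun x => x * f x) volume a b :=
    (continuousOn_id.mul hfc).intervalIntegrable
  have i2 : IntervalIntegrable (fun x => x ^ 2 * f' x) volume a b :=
    hint.continuousOn_mul (by fun_prop)
  have i3 : IntervalIntegrable (fun x => x ^ 2 * |f' x|) volume a b :=
    hint.abs.continuousOn_mul (by fun_prop)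
  have hibp : (b ^ 2 * f b - a ^ 2 * f a) / 2 - ∫ x in a..b, x * f x
      = (∫ x in a..b, x ^ 2 * f' x) / 2 := by
    have h := intervalIntegral.integral_eq_sub_of_hasDerivAt (a := a) (b := b)
      (f := fun x => x ^ 2 * f x / 2) (f' := fun x => x * f x + x ^ 2 * f' x / 2)
      (fun x hx => by
        rw [uIcc_of_le hab.le] at hx
        have := (((hasDerivAt_id x).pow 2).mul (hderiv x (ha.le.trans hx.1))).div_const 2
        refine this.congr_deriv ?_
        simp
        ring) (i1.add (i2.div_const 2))
    rw [intervalIntegral.integral_add i1 (i2.div_const 2), intervalIntegral.integral_div] at h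
    linarith
  set K := ∫ x in a..b, x ^ 2 * |f' x| with hK
  have hKle : |∫ x in a..b, x ^ 2 * f' x| ≤ K := by
    have h := intervalIntegral.abs_integral_le_integral_abs (μ := volume)
      (f := fun x => x ^ 2 * f' x) hab.le
    have e : (fun x : ℝ => |x ^ 2 * f' x|) = fun x => x ^ 2 * |f' x| := by
      funext x; rw [abs_mul, abs_of_nonneg (sq_nonneg x)]
    simp only [e] at h
    exact h
  have hK0 : 0 ≤ K := (abs_nonneg _).trans hKle
  set g : ℝ → ℝ := fun x =>
    (Real.log x - Real.log a) / ℓ * A + m * (1 - (Real.log x - Real.log a) / ℓ) * B with hg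
  have hbound : ∀ x ∈ Icc a b, |f' x| ^ q ≤ g x := by
    intro x hx
    have hx0 : 0 < x := ha.trans_le hx.1
    have l1 : Real.log a ≤ Real.log x := Real.log_le_log ha hx.1
    have l2 : Real.log x ≤ Real.log b := Real.log_le_log hx0 hx.2
    have h := hconv b ⟨hb.le, le_max_right _ _⟩ (a ^ (1/m)) ⟨by positivity, le_max_left _ _⟩
      ((Real.log x - Real.log a) / ℓ)
      ⟨div_nonneg (by linarith) hlog.le, (div_le_one hlog).2 (by linarith)⟩
    have e : b ^ ((Real.log x - Real.log a) / ℓ) *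
        (a ^ (1/m)) ^ (m * (1 - (Real.log x - Real.log a) / ℓ)) = x := by
      rw [← Real.rpow_mul ha.le, Real.rpow_def_of_pos hb, Real.rpow_def_of_pos ha, ← Real.exp_add]
      rw [← Real.exp_log hx0]
      congr 1
      rw [Real.log_exp]
      have := hlog.ne'
      field_simp
      rw [hℓ]; ring
    simp only [Real.rpow_one] at h
    rw [e] at h
    exact h
  have hgc : ContinuousOn g (uIcc a b) := by
    have : ContinuousOn Real.log (uIcc a b) := Real.continuousOn_log.mono (fun x hx => by
      rw [uIcc_of_le hab.le] at hx
      exact (ha.trans_le hx.1).ne')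
    fun_prop
  have i4 : IntervalIntegrable (fun x => x ^ 2 * g x) volume a b :=
    (ContinuousOn.mul (by fun_prop) hgc).intervalIntegrable
  set S := m * (L (a ^ 3) (b ^ 3) - a ^ 3) * B + (b ^ 3 - L (a ^ 3) (b ^ 3)) * A with hS
  have hJ : ∫ x in a..b, x ^ 2 * g x = S / 3 := by
    have hL : L (a ^ 3) (b ^ 3) = (b ^ 3 - a ^ 3) / (3 * ℓ) := by
      unfold L
      rw [Real.log_pow, Real.log_pow, hℓ]
      push_cast
      ring
    rw [intervalIntegral.integral_eq_sub_of_hasDerivAt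
      (f := fun x => (x ^ 3 / 3 * (Real.log x - Real.log a) - x ^ 3 / 9) / ℓ * (A - m * B)
        + x ^ 3 / 3 * (m * B)) _ i4]
    · rw [hS, hL]
      have := hlog.ne'
      simp only [← hℓ, sub_self]
      field_simp
      ring
    · intro x hx
      rw [uIcc_of_le hab.le] at hx
      have hx0 : 0 < x := ha.trans_le hx.1
      have d3 : HasDerivAt (fun x : ℝ => x ^ 3) (3 * x ^ 2) x := by
        simpa using hasDerivAt_pow 3 x
      have := ((((d3.div_const 3).mul ((Real.hasDerivAt_log hx0.ne').sub_const (Real.log a))).sub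
        (d3.div_const 9)).div_const ℓ).mul_const (A - m * B) |>.add
        ((d3.div_const 3).mul_const (m * B))
      refine this.congr_deriv ?_
      simp only [hg]
      have := hlog.ne'
      field_simp
      ring
  have hI : ∫ x in a..b, x ^ 2 = (b ^ 3 - a ^ 3) / 3 := by
    rw [integral_pow]; norm_num
  set I := (b ^ 3 - a ^ 3) / 3 with hIdef
  have hI0 : 0 < I := by rw [hIdef]; linarith
  have hS0 : 0 ≤ S / 3 := by
    rw [← hJ]
    refine intervalIntegral.integral_nonneg hab.le fun x hx => ?_
    exact mul_nonneg (sq_nonneg x) ((by positivity : 0 ≤ |f' x| ^ q).trans (hbound x hx))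
  have hmain : K ≤ I ^ (1 - 1/q) * (S / 3) ^ (1/q) := by
    rcases hK0.eq_or_lt with h0 | hKpos
    · rw [← h0]; positivity
    set k := K / I with hk
    have hkpos : 0 < k := by positivity
    have key : k ^ q * I ≤ S / 3 := by
      have h := intervalIntegral.integral_mono_on (μ := volume) (a := a) (b := b)
        (f := fun x => (k ^ q - q * k ^ (q - 1) * k) * x ^ 2
          + q * k ^ (q - 1) * (x ^ 2 * |f' x|)) (g := fun x => x ^ 2 * g x) hab.le
        ((Continuous.intervalIntegrable (by fun_prop) _ _).add (i3.const_mul _)) i4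
        (fun x hx => by
          have h1 := (tangent_aux q k |f' x| hq hkpos (abs_nonneg _)).trans (hbound x hx)
          have := mul_le_mul_of_nonneg_left h1 (sq_nonneg x)
          linarith)
      rw [intervalIntegral.integral_add (Continuous.intervalIntegrable (by fun_prop) _ _)
        (i3.const_mul _), intervalIntegral.integral_const_mul,
        intervalIntegral.integral_const_mul, hI, hJ, ← hK] at h
      have : K = k * I := by rw [hk]; field_simp
      rw [this] at h
      linarith
    have h1 : k ≤ (S / 3 / I) ^ (1/q) := by
      rw [one_div, Real.le_rpow_inv_iff_of_pos hkpos.le (by positivity) hq0, le_div_iff₀ hI0]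
      exact key
    rw [Real.div_rpow hS0 hI0.le, hk, div_le_iff₀ hI0] at h1
    rw [Real.rpow_sub hI0, Real.rpow_one]
    refine h1.trans (le_of_eq ?_)
    ring
  have hfin : I ^ (1 - 1/q) * (S / 3) ^ (1/q) = (b ^ 3 - a ^ 3) ^ (1 - 1/q) * S ^ (1/q) / 3 := by
    rw [hIdef, Real.div_rpow (by linarith) (by norm_num), Real.div_rpow (by linarith) (by norm_num),
      div_mul_div_comm, ← Real.rpow_add (by norm_num)]
    norm_num
  rw [hibp, abs_div, abs_two]
  rw [hfin] at hmain
  linarith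
end

section
/- Let f : [0,∞) → ℝ be differentiable with f' Lebesgue integrable on [a,b], where 0 < a < b < ∞. Let (α,m) ∈ (0,1]² and q ≥ 1. If |f'|^q is (α,m)-GA-convex on [0, max{a^{1/m}, b}], then |(b²·f(b) − a²·f(a))/2 − ∫_a^b x·f(x) dx| ≤ ((ln b − ln a)/2) · L(a³,b³) · |f'(b)|. -/
open Real MeasureTheory Set

theorem aux_freq (f f' : ℝ → ℝ) (hderiv : ∀ x ∈ Ici (0:ℝ), HasDerivAt f (f' x) x) :
    ∃ᶠ y in nhdsWithin (0:ℝ) (Ioi 0), |f' y| ≤ |f' 0| + 1 := by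
  rw [Filter.frequently_iff]
  intro U hU
  obtain ⟨d, hd, hdU⟩ := mem_nhdsGT_iff_exists_Ioo_subset.1 hU
  have h0 := (hderiv 0 (by simp)).tendsto_slope
  have h1 : Filter.Tendsto (slope f 0) (nhdsWithin 0 (Ioi 0)) (nhds (f' 0)) :=
    h0.mono_left (nhdsWithin_mono _ (fun x (hx : 0 < x) => hx.ne'))
  have h2 : ∀ᶠ y in nhdsWithin (0:ℝ) (Ioi 0), |slope f 0 y| < |f' 0| + 1 :=
    h1.abs.eventually (gt_mem_nhds (by linarith))
  have h3 : ∀ᶠ y in nhdsWithin (0:ℝ) (Ioi 0), y ∈ Ioo 0 d := Ioo_mem_nhdsGT hd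
  obtain ⟨y, hy2, hy3⟩ := (h2.and h3).exists
  obtain ⟨c, hc, hc'⟩ := exists_hasDerivAt_eq_slope f f' hy3.1
    (fun x hx => (hderiv x hx.1).continuousAt.continuousWithinAt)
    (fun x hx => hderiv x hx.1.le)
  refine ⟨c, hdU ⟨hc.1, hc.2.trans hy3.2⟩, ?_⟩
  rw [hc', ← slope_def_field]
  exact hy2.le

theorem aux_le (f f' : ℝ → ℝ) (b c α m q x : ℝ) (hx : 0 < x) (hxb : x < b) (hbc : b ≤ c)
    (hα : α ∈ Ioc (0:ℝ) 1) (hm : m ∈ Ioc (0:ℝ) 1) (hq : 1 ≤ q)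
    (hderiv : ∀ x ∈ Ici (0:ℝ), HasDerivAt f (f' x) x)
    (hconv : GAConvexOn α m c (fun x => |f' x| ^ q)) : |f' x| ≤ |f' b| := by
  have hb : 0 < b := hx.trans hxb
  have hq0 : 0 < q := by linarith
  by_contra! hlt
  have hlt' : |f' b| ^ q < |f' x| ^ q := Real.rpow_lt_rpow (abs_nonneg _) hlt hq0
  set M : ℝ := (|f' 0| + 1) ^ q with hM
  have hM0 : 0 ≤ M := by positivity
  have hlogt : Filter.Tendsto (fun y => Real.log b + m * (-Real.log y))
      (nhdsWithin 0 (Ioi 0)) Filter.atTop :=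
    Filter.tendsto_atTop_add_const_left _ _
      ((Filter.tendsto_neg_atBot_atTop.comp Real.tendsto_log_nhdsGT_zero).const_mul_atTop hm.1)
  have hg : Filter.Tendsto (fun y => (Real.log b - Real.log x) /
      (Real.log b + m * (-Real.log y)) * M) (nhdsWithin 0 (Ioi 0)) (nhds (0 * M)) :=
    (hlogt.const_div_atTop _).mul_const M
  rw [zero_mul] at hg
  have e1 := hg.eventually (gt_mem_nhds (sub_pos.2 hlt'))
  have e2 := hlogt.eventually_gt_atTop (Real.log b - Real.log x)
  have e3 : ∀ᶠ y in nhdsWithin (0:ℝ) (Ioi 0), y ∈ Ioo 0 b := Ioo_mem_nhdsGT hb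
  obtain ⟨y, hy, ⟨h1, h2⟩, h3⟩ :=
    ((aux_freq f f' hderiv).and_eventually ((e1.and e2).and e3)).exists
  have hlog : 0 < Real.log b - Real.log x := sub_pos.2 (Real.log_lt_log hx hxb)
  set D := Real.log b + m * (-Real.log y) with hD
  have hD0 : 0 < D := hlog.trans h2
  set r := (Real.log b - Real.log x) / D with hr
  have hr0 : 0 < r := div_pos hlog hD0
  have hr1 : r < 1 := (div_lt_one hD0).2 h2
  have hrD : r * D = Real.log b - Real.log x := div_mul_cancel₀ _ hD0.ne'
  have hk := hconv b ⟨hb.le, hbc⟩ y ⟨h3.1.le, h3.2.le.trans hbc⟩ (1 - r)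
    ⟨by linarith, by linarith⟩
  have hxe : b ^ (1 - r) * y ^ (m * (1 - (1 - r))) = x := by
    rw [Real.rpow_def_of_pos hb, Real.rpow_def_of_pos h3.1, ← Real.exp_add]
    rw [← Real.exp_log hx]
    congr 1
    rw [hD] at hrD
    linarith
  simp only [hxe] at hk
  have hyM : |f' y| ^ q ≤ M := Real.rpow_le_rpow (abs_nonneg _) hy hq0.le
  have hl1 : (1 - r) ^ α ≤ 1 := Real.rpow_le_one (by linarith) (by linarith) hα.1.le
  have hl2 : 1 - r ≤ (1 - r) ^ α := by
    simpa using Real.rpow_le_rpow_of_exponent_ge (by linarith : 0 < 1 - r) (by linarith) hα.2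
  have hB : 0 ≤ |f' b| ^ q := by positivity
  have hY : 0 ≤ |f' y| ^ q := by positivity
  have k1 : (1 - r) ^ α * |f' b| ^ q ≤ |f' b| ^ q := mul_le_of_le_one_left hB hl1
  have k2 : m * (1 - (1 - r) ^ α) ≤ r := by nlinarith [hm.1, hm.2]
  have k3 : m * (1 - (1 - r) ^ α) * |f' y| ^ q ≤ r * M := mul_le_mul k2 hyM hY hr0.le
  linarith

theorem stmt_5 (f f' : ℝ → ℝ) (a b α m q : ℝ) (ha : 0 < a) (hab : a < b)
    (hα : α ∈ Ioc (0:ℝ) 1) (hm : m ∈ Ioc (0:ℝ) 1) (hq : 1 ≤ q)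
    (hderiv : ∀ x ∈ Ici (0:ℝ), HasDerivAt f (f' x) x)
    (hint : IntervalIntegrable f' volume a b)
    (hconv : GAConvexOn α m (max (a ^ (1/m)) b) (fun x => |f' x| ^ q)) :
    |(b ^ 2 * f b - a ^ 2 * f a) / 2 - ∫ x in a..b, x * f x| ≤
      ((Real.log b - Real.log a) / 2) * L (a ^ 3) (b ^ 3) * |f' b| := by
  have hle : ∀ x ∈ Ioc a b, |f' x| ≤ |f' b| := by
    intro x hx
    rcases hx.2.eq_or_lt with h | h
    · rw [h]
    · exact aux_le f f' b _ α m q x (ha.trans hx.1) h (le_max_right _ _) hα hm hq hderiv hconv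
  have hb : 0 < b := ha.trans hab
  have hab' := hab.le
  have hI1 : IntervalIntegrable (fun x => x * f x) volume a b := by
    apply ContinuousOn.intervalIntegrable
    rw [uIcc_of_le hab']
    intro x hx
    exact (continuousAt_id.mul
      (hderiv x (ha.le.trans hx.1)).continuousAt).continuousWithinAt
  have hI2 : IntervalIntegrable (fun x => x ^ 2 / 2 * f' x) volume a b :=
    hint.continuousOn_mul (by fun_prop)
  have hF : ∫ x in a..b, (x * f x + x ^ 2 / 2 * f' x) = b ^ 2 / 2 * f b - a ^ 2 / 2 * f a := by
    refine intervalIntegral.integral_eq_sub_of_hasDerivAt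
      (f := fun x => x ^ 2 / 2 * f x) ?_ (hI1.add hI2)
    intro x hx
    rw [uIcc_of_le hab'] at hx
    have h := ((hasDerivAt_pow 2 x).div_const 2).mul (hderiv x (ha.le.trans hx.1))
    refine h.congr_deriv ?_
    simp
  rw [intervalIntegral.integral_add hI1 hI2] at hF
  have hE : (b ^ 2 * f b - a ^ 2 * f a) / 2 - ∫ x in a..b, x * f x
      = ∫ x in a..b, x ^ 2 / 2 * f' x := by linarith
  rw [hE]
  have hbd : ‖∫ x in a..b, x ^ 2 / 2 * f' x‖ ≤ ∫ x in a..b, x ^ 2 / 2 * |f' b| := by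
    refine intervalIntegral.norm_integral_le_of_norm_le hab' ?_
      (Continuous.intervalIntegrable (by fun_prop) _ _)
    refine Filter.Eventually.of_forall fun x hx => ?_
    rw [norm_mul, Real.norm_eq_abs, Real.norm_eq_abs, abs_of_nonneg (by positivity)]
    exact mul_le_mul_of_nonneg_left (hle x hx) (by positivity)
  rw [Real.norm_eq_abs] at hbd
  refine hbd.trans (le_of_eq ?_)
  rw [intervalIntegral.integral_mul_const, intervalIntegral.integral_div, integral_pow]
  have hlog : 0 < Real.log b - Real.log a := sub_pos.2 (Real.log_lt_log ha hab)
  unfold L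
  rw [Real.log_pow, Real.log_pow]
  have h3 : ((3:ℕ):ℝ) * Real.log b - ((3:ℕ):ℝ) * Real.log a
      = 3 * (Real.log b - Real.log a) := by push_cast; ring
  rw [h3]
  generalize Real.log b - Real.log a = t at hlog
  have := hlog.ne'
  push_cast
  field_simp
  ring
end

section
/- Let f : [0,∞) → ℝ be differentiable with f' Lebesgue integrable on [a,b], where 0 < a < b < ∞. Let (α,m) ∈ (0,1]² and q > 1. If |f'|^q is (α,m)-GA-convex on [0, max{a^{1/m}, b}], then |(b²·f(b) − a²·f(a))/2 − ∫_a^b x·f(x) dx| ≤ ((ln b − ln a)/2) · (1/(α+1))^{1/q} · [L(a^{3q/(q−1)}, b^{3q/(q−1)})]^{1−1/q} · [ |f'(b)|^q + α·m·|f'(a^{1/m})|^q ]^{1/q}. -/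
open Real MeasureTheory Set

theorem stmt_6 (f f' : ℝ → ℝ) (a b α m q : ℝ) (ha : 0 < a) (hab : a < b)
    (hα : α ∈ Ioc (0:ℝ) 1) (hm : m ∈ Ioc (0:ℝ) 1) (hq : 1 < q)
    (hderiv : ∀ x ∈ Ici (0:ℝ), HasDerivAt f (f' x) x)
    (hint : IntervalIntegrable f' volume a b)
    (hconv : GAConvexOn α m (max (a ^ (1/m)) b) (fun x => |f' x| ^ q)) :
    |(b ^ 2 * f b - a ^ 2 * f a) / 2 - ∫ x in a..b, x * f x| ≤
      ((Real.log b - Real.log a) / 2) * (1 / (α + 1)) ^ (1/q) *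
        L (a ^ (3 * q / (q - 1))) (b ^ (3 * q / (q - 1))) ^ (1 - 1/q) *
        (|f' b| ^ q + α * m * |f' (a ^ (1/m))| ^ q) ^ (1/q) := by
  obtain ⟨hα0, hα1⟩ := hα
  obtain ⟨hm0, hm1⟩ := hm
  have hb : 0 < b := ha.trans hab
  have hq0 : 0 < q := by linarith
  have hq1 : 0 < q - 1 := by linarith
  have hlog : 0 < Real.log b - Real.log a := sub_pos.mpr (Real.log_lt_log ha hab)
  set D := Real.log b - Real.log a with hD
  set B := |f' b| ^ q with hB
  set A := |f' (a ^ (1/m))| ^ q with hA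
  have hB0 : 0 ≤ B := by positivity
  have hA0 : 0 ≤ A := by positivity
  set p := q / (q - 1) with hp
  have hp0 : 0 < p := by positivity
  have hpq : p.HolderConjugate q := by
    rw [Real.holderConjugate_iff]
    constructor
    · rw [hp, lt_div_iff₀ hq1]; linarith
    · rw [hp]; field_simp; ring
  have hpinv : 1 / p = 1 - 1 / q := by rw [hp]; field_simp
  have h3p : 3 * q / (q - 1) = 3 * p := by rw [hp]; ring
  rw [h3p, ← hpinv]
  -- integration by parts
  have hpos : ∀ x ∈ Icc a b, 0 < x := fun x hx => lt_of_lt_of_le ha hx.1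
  have huIcc : uIcc a b = Icc a b := uIcc_of_le hab.le
  have hibp : (b ^ 2 * f b - a ^ 2 * f a) / 2 - ∫ x in a..b, x * f x
      = (1/2) * ∫ x in a..b, x ^ 2 * f' x := by
    have h := intervalIntegral.integral_mul_deriv_eq_deriv_mul (a := a) (b := b)
      (u := fun x : ℝ => x ^ 2 / 2) (v := f) (u' := fun x => x) (v' := f')
      (fun x _ => by
        have := (hasDerivAt_pow 2 x).div_const 2
        convert this using 1
        simp)
      (fun x hx => hderiv x (by rw [huIcc] at hx; exact (hpos x hx).le))
      (continuous_id.intervalIntegrable _ _) hint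
    have h2 : ∫ x in a..b, x ^ 2 * f' x = 2 * ∫ x in a..b, x ^ 2 / 2 * f' x := by
      rw [← intervalIntegral.integral_const_mul]
      congr 1; ext x; ring
    rw [h2, h]; ring
  rw [hibp]
  -- pointwise convexity bound
  set t : ℝ → ℝ := fun x => (Real.log x - Real.log a) / D with ht
  have ht01 : ∀ x ∈ Icc a b, t x ∈ Icc (0:ℝ) 1 := by
    intro x hx
    have h1 := Real.log_le_log ha hx.1
    have h2 := Real.log_le_log (hpos x hx) hx.2
    refine ⟨div_nonneg (by linarith) hlog.le, ?_⟩
    rw [ht]; simp only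
    rw [div_le_one hlog]; linarith
  set g : ℝ → ℝ := fun x => (t x) ^ α * B + m * (1 - (t x) ^ α) * A with hg
  have hfg : ∀ x ∈ Icc a b, |f' x| ^ q ≤ g x := by
    intro x hx
    have h := hconv b ⟨hb.le, le_max_right _ _⟩ (a ^ (1/m))
      ⟨(Real.rpow_pos_of_pos ha _).le, le_max_left _ _⟩ (t x) (ht01 x hx)
    have hx' : b ^ (t x) * (a ^ (1/m)) ^ (m * (1 - t x)) = x := by
      rw [← Real.rpow_mul ha.le, Real.rpow_def_of_pos hb, Real.rpow_def_of_pos ha, ← Real.exp_add]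
      have : Real.log b * t x + Real.log a * (1 / m * (m * (1 - t x))) = Real.log x := by
        have e : 1 / m * (m * (1 - t x)) = 1 - t x := by field_simp
        rw [e]
        have e2 : D * t x = Real.log x - Real.log a := by
          rw [ht]; field_simp
        have e3 : Real.log b = D + Real.log a := by rw [hD]; ring
        rw [e3]; linarith
      rw [this, Real.exp_log (hpos x hx)]
    simp only [hx'] at h
    exact h
  have hgle : ∀ x ∈ Icc a b, g x ≤ B + A := by
    intro x hx
    have h0 : 0 ≤ (t x) ^ α := Real.rpow_nonneg (ht01 x hx).1 _
    have h1 : (t x) ^ α ≤ 1 := Real.rpow_le_one (ht01 x hx).1 (ht01 x hx).2 hα0.le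
    have h2 : (t x) ^ α * B ≤ 1 * B := mul_le_mul_of_nonneg_right h1 hB0
    have h3 : m * (1 - (t x) ^ α) ≤ 1 := mul_le_one₀ hm1 (by linarith) (by linarith)
    have h4 := mul_le_mul_of_nonneg_right h3 hA0
    simp only [hg]; linarith
  have hfb : ∀ x ∈ Icc a b, |f' x| ≤ (B + A) ^ (1/q) := by
    intro x hx
    have h := (hfg x hx).trans (hgle x hx)
    have h2 := Real.rpow_le_rpow (by positivity) h (by positivity : 0 ≤ 1/q)
    rwa [← Real.rpow_mul (abs_nonneg _), mul_one_div_cancel hq0.ne', Real.rpow_one] at h2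
  -- Hoelder
  set u : ℝ → ℝ := fun x => x ^ (2 + 1/q) with hu
  set v : ℝ → ℝ := fun x => x ^ (-(1/q)) * |f' x| with hv
  set μ := volume.restrict (Ioc a b) with hμ
  have hae : ∀ᵐ x ∂μ, x ∈ Icc a b := by
    filter_upwards [ae_restrict_mem measurableSet_Ioc] with x hx using Ioc_subset_Icc_self hx
  have huint : MemLp u (ENNReal.ofReal p) μ := by
    refine MemLp.of_bound (C := b ^ (2 + 1/q)) ?_ ?_
    · exact (measurable_id.pow_const _).aestronglyMeasurable
    · filter_upwards [hae] with x hx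
      have := hpos x hx
      rw [Real.norm_of_nonneg (by positivity)]
      exact Real.rpow_le_rpow this.le hx.2 (by positivity)
  have hvint : MemLp v (ENNReal.ofReal q) μ := by
    refine MemLp.of_bound (C := a ^ (-(1/q)) * (B + A) ^ (1/q)) ?_ ?_
    · refine (measurable_id.pow_const _).aestronglyMeasurable.mul ?_
      exact hint.1.aestronglyMeasurable.norm
    · filter_upwards [hae] with x hx
      have := hpos x hx
      rw [Real.norm_of_nonneg (by positivity)]
      refine mul_le_mul ?_ (hfb x hx) (abs_nonneg _) (by positivity)
      exact Real.rpow_le_rpow_of_nonpos ha hx.1 (by simp only [Left.neg_nonpos_iff]; positivity)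
  have hholder := integral_mul_le_Lp_mul_Lq_of_nonneg hpq
    (by filter_upwards [hae] with x hx; have := hpos x hx; simp only [hu, Pi.zero_apply]; positivity)
    (by filter_upwards [hae] with x hx; have := hpos x hx; simp only [hv, Pi.zero_apply]; positivity)
    huint hvint
  -- first factor
  have hU : ∫ x, u x ^ p ∂μ = D * L (a ^ (3 * p)) (b ^ (3 * p)) := by
    have h1 : ∫ x, u x ^ p ∂μ = ∫ x in a..b, x ^ (3 * p - 1) := by
      rw [intervalIntegral.integral_of_le hab.le]
      refine integral_congr_ae ?_
      filter_upwards [hae] with x hx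
      have := hpos x hx
      simp only [hu]
      rw [← Real.rpow_mul this.le]
      congr 1
      rw [hp]; field_simp; ring
    rw [h1, integral_rpow (Or.inl (by linarith))]
    unfold L
    rw [Real.log_rpow ha, Real.log_rpow hb, ← mul_sub, ← hD]
    simp only [sub_add_cancel]
    field_simp
  -- second factor
  have hderivT : ∀ x ∈ uIcc a b, HasDerivAt
      (fun x => D * (m * A) * t x + D * (B - m * A) * ((t x) ^ (α + 1) / (α + 1)))
      (x⁻¹ * g x) x := by
    intro x hx
    rw [huIcc] at hx
    have hx0 := hpos x hx
    have h1 : HasDerivAt t (x⁻¹ / D) x :=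
      ((Real.hasDerivAt_log hx0.ne').sub_const _).div_const _
    have h2 := (h1.rpow_const (p := α + 1) (Or.inr (by linarith))).div_const (α + 1)
    have h3 := (h1.const_mul (D * (m * A))).add (h2.const_mul (D * (B - m * A)))
    refine h3.congr_deriv ?_
    rw [add_sub_cancel_right]; simp only [hg]
    field_simp
    ring
  have hcont : ContinuousOn (fun x => x⁻¹ * g x) (uIcc a b) := by
    rw [huIcc]
    have ht' : ContinuousOn t (Icc a b) :=
      ((Real.continuousOn_log.mono (fun x hx => (hpos x hx).ne')).sub
        continuousOn_const).div_const _
    have ht2 : ContinuousOn (fun x => (t x) ^ α) (Icc a b) :=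
      ht'.rpow_const (fun x _ => Or.inr hα0.le)
    refine (continuousOn_id.inv₀ (fun x hx => (hpos x hx).ne')).mul ?_
    exact (ht2.mul continuousOn_const).add
      ((continuousOn_const.mul (continuousOn_const.sub ht2)).mul continuousOn_const)
  have hGint := hcont.intervalIntegrable (μ := volume)
  have hV : ∫ x, v x ^ q ∂μ ≤ D * ((1 / (α + 1)) * (B + α * m * A)) := by
    have h1 : ∫ x, v x ^ q ∂μ ≤ ∫ x, x⁻¹ * g x ∂μ := by
      refine integral_mono_of_nonneg ?_ hGint.1 ?_
      · filter_upwards [hae] with x hx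
        have := hpos x hx
        simp only [hv, Pi.zero_apply]; positivity
      · filter_upwards [hae] with x hx
        have h0 := hpos x hx
        simp only [hv]
        rw [Real.mul_rpow (by positivity) (abs_nonneg _), ← Real.rpow_mul h0.le]
        have : -(1/q) * q = -1 := by field_simp
        rw [this, Real.rpow_neg_one]
        exact mul_le_mul_of_nonneg_left (hfg x hx) (by positivity)
    refine h1.trans (le_of_eq ?_)
    have h2 := intervalIntegral.integral_eq_sub_of_hasDerivAt hderivT hGint
    rw [intervalIntegral.integral_of_le hab.le] at h2
    rw [h2]
    have hta : t a = 0 := by simp [ht]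
    have htb : t b = 1 := by simp only [ht]; exact div_self hlog.ne'
    rw [hta, htb, Real.one_rpow, Real.zero_rpow (by linarith)]
    field_simp
    ring
  -- combine
  have habs : |∫ x in a..b, x ^ 2 * f' x| ≤ ∫ x, u x * v x ∂μ := by
    refine (intervalIntegral.abs_integral_le_integral_abs hab.le).trans (le_of_eq ?_)
    rw [intervalIntegral.integral_of_le hab.le]
    refine integral_congr_ae ?_
    filter_upwards [hae] with x hx
    have h0 := hpos x hx
    simp only [hu, hv]
    rw [← mul_assoc, ← Real.rpow_add h0, abs_mul, abs_of_pos (by positivity : 0 < x ^ 2)]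
    congr 1
    rw [add_neg_cancel_right]
    norm_num
  have hL0 : 0 ≤ L (a ^ (3 * p)) (b ^ (3 * p)) := by
    unfold L
    have h1 : a ^ (3 * p) ≤ b ^ (3 * p) := Real.rpow_le_rpow ha.le hab.le (by positivity)
    have h2 := Real.log_le_log (by positivity) h1
    exact div_nonneg (by linarith) (by linarith)
  have hV0 : 0 ≤ ∫ x, v x ^ q ∂μ := by
    refine integral_nonneg_of_ae ?_
    filter_upwards [hae] with x hx
    have := hpos x hx
    simp only [hv, Pi.zero_apply]; positivity
  have hS0 : 0 ≤ B + α * m * A := by positivity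
  have hfin : ∫ x, u x * v x ∂μ ≤ (D * L (a ^ (3 * p)) (b ^ (3 * p))) ^ (1/p) *
      (D * ((1 / (α + 1)) * (B + α * m * A))) ^ (1/q) := by
    refine hholder.trans ?_
    rw [hU]
    exact mul_le_mul_of_nonneg_left (Real.rpow_le_rpow hV0 hV (by positivity))
      (Real.rpow_nonneg (mul_nonneg hlog.le hL0) _)
  have hDD : D ^ (1/p) * D ^ (1/q) = D := by
    rw [← Real.rpow_add hlog, hpinv, sub_add_cancel, Real.rpow_one]
  rw [Real.mul_rpow hlog.le hL0, Real.mul_rpow hlog.le (by positivity),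
    Real.mul_rpow (by positivity) hS0] at hfin
  rw [abs_mul, abs_of_pos (by norm_num : (0:ℝ) < 1/2)]
  calc (1/2) * |∫ x in a..b, x ^ 2 * f' x| ≤ (1/2) * _ :=
        mul_le_mul_of_nonneg_left (habs.trans hfin) (by norm_num)
    _ = ((D ^ (1/p) * D ^ (1/q)) / 2) * (1 / (α + 1)) ^ (1/q) *
        L (a ^ (3 * p)) (b ^ (3 * p)) ^ (1/p) * (B + α * m * A) ^ (1/q) := by ring
    _ = _ := by rw [hDD]
end

section
/- Let f : [0,∞) → ℝ be differentiable with f' Lebesgue integrable on [a,b], where 0 < a < b < ∞. Let m ∈ (0,1] and q > 1. If |f'|^q is (1,m)-GA-convex on [0, max{a^{1/m}, b}], then |(b²·f(b) − a²·f(a))/2 − ∫_a^b x·f(x) dx| ≤ ((ln b − ln a)/2^{1+1/q}) · [L(a^{3q/(q−1)}, b^{3q/(q−1)})]^{1−1/q} · [ |f'(b)|^q + m·|f'(a^{1/m})|^q ]^{1/q}. -/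
open Real MeasureTheory Set

/-- The Hölder inequality for continuous nonnegative functions on an interval. -/
theorem holder_aux (F H : ℝ → ℝ) (a b p q : ℝ) (hab : a ≤ b) (hpq : p.HolderConjugate q)
    (hF : ContinuousOn F (Icc a b)) (hH : ContinuousOn H (Icc a b))
    (hF0 : ∀ x ∈ Icc a b, 0 ≤ F x) (hH0 : ∀ x ∈ Icc a b, 0 ≤ H x) :
    ∫ x in a..b, F x * H x ≤
      (∫ x in a..b, F x ^ p) ^ (1/p) * (∫ x in a..b, H x ^ q) ^ (1/q) := by
  have mem : ∀ (K : ℝ → ℝ) (r : ENNReal), ContinuousOn K (Icc a b) →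
      MemLp K r (volume.restrict (Ioc a b)) := by
    intro K r hK
    obtain ⟨C, hC⟩ := isCompact_Icc.exists_bound_of_continuousOn hK
    refine MemLp.of_bound ?_ C ?_
    · exact (hK.mono Ioc_subset_Icc_self).aestronglyMeasurable measurableSet_Ioc
    · filter_upwards [ae_restrict_mem measurableSet_Ioc] with x hx
      exact hC x (Ioc_subset_Icc_self hx)
  simp only [intervalIntegral.integral_of_le hab]
  refine integral_mul_le_Lp_mul_Lq_of_nonneg hpq ?_ ?_ (mem F _ hF) (mem H _ hH)
  · filter_upwards [ae_restrict_mem measurableSet_Ioc] with x hx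
    exact hF0 x (Ioc_subset_Icc_self hx)
  · filter_upwards [ae_restrict_mem measurableSet_Ioc] with x hx
    exact hH0 x (Ioc_subset_Icc_self hx)

theorem stmt_7 (f f' : ℝ → ℝ) (a b m q : ℝ) (ha : 0 < a) (hab : a < b)
    (hm : m ∈ Ioc (0:ℝ) 1) (hq : 1 < q)
    (hderiv : ∀ x ∈ Ici (0:ℝ), HasDerivAt f (f' x) x)
    (hint : IntervalIntegrable f' volume a b)
    (hconv : GAConvexOn 1 m (max (a ^ (1/m)) b) (fun x => |f' x| ^ q)) :
    |(b ^ 2 * f b - a ^ 2 * f a) / 2 - ∫ x in a..b, x * f x| ≤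
      ((Real.log b - Real.log a) / 2 ^ (1 + 1/q)) *
        L (a ^ (3 * q / (q - 1))) (b ^ (3 * q / (q - 1))) ^ (1 - 1/q) *
        (|f' b| ^ q + m * |f' (a ^ (1/m))| ^ q) ^ (1/q) := by
  obtain ⟨hm0, hm1⟩ := hm
  have hb : 0 < b := ha.trans hab
  have hq0 : 0 < q := by linarith
  have hq1 : 0 < q - 1 := by linarith
  set p : ℝ := q / (q - 1) with hp
  have hp0 : 0 < p := div_pos hq0 hq1
  have hpinv : 1 / p = 1 - 1 / q := by rw [hp]; field_simp
  have hpq : p.HolderConjugate q := (Real.HolderConjugate.conjExponent hq).symm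
  have h3p : 3 * q / (q - 1) = 3 * p := by rw [hp]; ring
  rw [h3p]
  set D : ℝ := Real.log b - Real.log a with hD
  have hD0 : 0 < D := sub_pos.2 (Real.log_lt_log ha hab)
  set A : ℝ := |f' (a ^ (1/m))| ^ q with hA
  set B : ℝ := |f' b| ^ q with hB
  have hA0 : 0 ≤ A := by positivity
  have hB0 : 0 ≤ B := by positivity
  set t : ℝ → ℝ := fun x => (Real.log x - Real.log a) / D with ht
  set g : ℝ → ℝ := fun x => t x * B + m * (1 - t x) * A with hg
  have hpos : ∀ x ∈ Icc a b, 0 < x := fun x hx => ha.trans_le hx.1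
  have htmem : ∀ x ∈ Icc a b, t x ∈ Icc (0:ℝ) 1 := by
    intro x hx
    have h1 := Real.log_le_log ha hx.1
    have h2 := Real.log_le_log (hpos x hx) hx.2
    refine ⟨div_nonneg (by linarith) hD0.le, ?_⟩
    simp only [ht]
    rw [div_le_one hD0]; linarith
  have hg0 : ∀ x ∈ Icc a b, 0 ≤ g x := by
    intro x hx
    obtain ⟨h1, h2⟩ := htmem x hx
    have : 0 ≤ 1 - t x := by linarith
    simp only [hg]; positivity
  -- pointwise bound
  have hbound : ∀ x ∈ Icc a b, |f' x| ≤ g x ^ (1/q) := by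
    intro x hx
    have hx0 := hpos x hx
    have key := hconv b ⟨hb.le, le_max_right _ _⟩ (a ^ (1/m))
      ⟨(Real.rpow_pos_of_pos ha _).le, le_max_left _ _⟩ (t x) (htmem x hx)
    have e : b ^ t x * (a ^ (1/m)) ^ (m * (1 - t x)) = x := by
      rw [← Real.rpow_mul ha.le, Real.rpow_def_of_pos hb, Real.rpow_def_of_pos ha, ← Real.exp_add]
      have : Real.log x = Real.log a + t x * D := by
        simp only [ht]; field_simp; ring
      have e2 : Real.log b * t x + Real.log a * (1 / m * (m * (1 - t x))) = Real.log x := by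
        rw [this, hD]
        field_simp; ring
      rw [e2, Real.exp_log hx0]
    simp only [e, Real.rpow_one] at key
    have h1 : |f' x| = (|f' x| ^ q) ^ (1/q) := by
      rw [← Real.rpow_mul (abs_nonneg _), mul_one_div_cancel hq0.ne', Real.rpow_one]
    rw [h1]
    exact Real.rpow_le_rpow (by positivity) key (by positivity)
  have huIcc : uIcc a b = Icc a b := uIcc_of_le hab.le
  -- integration by parts
  have hfc : ContinuousOn f (Icc a b) := fun x hx =>
    (hderiv x (hpos x hx).le).continuousAt.continuousWithinAt
  have hxf : IntervalIntegrable (fun x => x * f x) volume a b := by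
    apply ContinuousOn.intervalIntegrable
    rw [huIcc]; exact continuousOn_id.mul hfc
  have hxf' : IntervalIntegrable (fun x => x ^ 2 * f' x) volume a b :=
    hint.continuousOn_mul (by fun_prop)
  have hparts : (b ^ 2 * f b - a ^ 2 * f a) / 2 - ∫ x in a..b, x * f x
      = (1/2) * ∫ x in a..b, x ^ 2 * f' x := by
    have h := intervalIntegral.integral_eq_sub_of_hasDerivAt (a := a) (b := b)
      (f := fun x => x ^ 2 / 2 * f x) (f' := fun x => x * f x + (1/2) * (x ^ 2 * f' x))
      (fun x hx => by
        rw [huIcc] at hx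
        have h1 := (((hasDerivAt_pow 2 x).div_const 2).mul (hderiv x (hpos x hx).le))
        refine HasDerivAt.congr_deriv (f := fun x => x ^ 2 / 2 * f x) h1 ?_
        norm_num; ring) (hxf.add (hxf'.const_mul _))
    rw [intervalIntegral.integral_add hxf (hxf'.const_mul _),
      intervalIntegral.integral_const_mul] at h
    linarith
  have hlogc : ContinuousOn Real.log (Icc a b) := fun x hx =>
    (Real.continuousAt_log (hpos x hx).ne').continuousWithinAt
  have hgc : ContinuousOn g (Icc a b) := by
    simp only [hg, ht]; fun_prop
  have hgqc : ContinuousOn (fun x => g x ^ (1/q)) (Icc a b) :=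
    hgc.rpow_const (fun x _ => Or.inr (by positivity))
  have step1 : |∫ x in a..b, x ^ 2 * f' x| ≤ ∫ x in a..b, x ^ 2 * g x ^ (1/q) := by
    refine (intervalIntegral.abs_integral_le_integral_abs hab.le).trans ?_
    refine intervalIntegral.integral_mono_on hab.le hxf'.abs ?_ ?_
    · apply ContinuousOn.intervalIntegrable
      rw [huIcc]; fun_prop
    · intro x hx
      rw [abs_mul, abs_of_nonneg (sq_nonneg x)]
      exact mul_le_mul_of_nonneg_left (hbound x hx) (sq_nonneg x)
  have step2 : ∫ x in a..b, x ^ 2 * g x ^ (1/q)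
      = ∫ x in a..b, x ^ (3 - 1/p) * (g x / x) ^ (1/q) := by
    refine intervalIntegral.integral_congr fun x hx => ?_
    rw [huIcc] at hx
    have hx0 := hpos x hx
    rw [Real.div_rpow (hg0 x hx) hx0.le, mul_div_assoc', mul_div_right_comm, ← Real.rpow_sub hx0]
    congr 1
    rw [hpinv, ← Real.rpow_two]
    congr 1; ring
  have hgx0 : ∀ x ∈ Icc a b, 0 ≤ g x / x := fun x hx => div_nonneg (hg0 x hx) (hpos x hx).le
  have hgxc : ContinuousOn (fun x => g x / x) (Icc a b) :=
    hgc.div continuousOn_id (fun x hx => (hpos x hx).ne')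
  have step3 := holder_aux (fun x => x ^ (3 - 1/p)) (fun x => (g x / x) ^ (1/q)) a b p q hab.le hpq
    (continuousOn_id.rpow_const (fun x hx => Or.inl (hpos x hx).ne'))
    (hgxc.rpow_const (fun x _ => Or.inr (by positivity)))
    (fun x hx => Real.rpow_nonneg (hpos x hx).le _)
    (fun x hx => Real.rpow_nonneg (hgx0 x hx) _)
  have hLpos : 0 ≤ L (a ^ (3 * p)) (b ^ (3 * p)) := by
    unfold L
    rw [Real.log_rpow ha, Real.log_rpow hb, ← mul_sub]
    have : a ^ (3 * p) ≤ b ^ (3 * p) := Real.rpow_le_rpow ha.le hab.le (by positivity)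
    exact div_nonneg (by linarith) (by positivity)
  have I1 : ∫ x in a..b, (x ^ (3 - 1/p)) ^ p = D * L (a ^ (3 * p)) (b ^ (3 * p)) := by
    have : ∫ x in a..b, (x ^ (3 - 1/p)) ^ p = ∫ x in a..b, x ^ (3 * p - 1) := by
      refine intervalIntegral.integral_congr fun x hx => ?_
      rw [huIcc] at hx
      rw [← Real.rpow_mul (hpos x hx).le]
      congr 1; field_simp
    rw [this, integral_rpow (Or.inl (by linarith))]
    unfold L
    rw [Real.log_rpow ha, Real.log_rpow hb, ← mul_sub, ← hD, sub_add_cancel]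
    field_simp
  have I2 : ∫ x in a..b, ((g x / x) ^ (1/q)) ^ q = D / 2 * (B + m * A) := by
    have : ∫ x in a..b, ((g x / x) ^ (1/q)) ^ q = ∫ x in a..b, g x / x := by
      refine intervalIntegral.integral_congr fun x hx => ?_
      rw [huIcc] at hx
      rw [← Real.rpow_mul (hgx0 x hx), one_div_mul_cancel hq0.ne', Real.rpow_one]
    rw [this, intervalIntegral.integral_eq_sub_of_hasDerivAt
      (f := fun x => (Real.log x - Real.log a) ^ 2 * ((B - m * A) / (2 * D))
        + m * A * (Real.log x - Real.log a))]
    · rw [← hD]; field_simp; ring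
    · intro x hx
      rw [huIcc] at hx
      have hx0 := hpos x hx
      have h1 := (Real.hasDerivAt_log hx0.ne').sub_const (Real.log a)
      have h2 := ((h1.pow 2).mul_const ((B - m * A) / (2 * D))).add (h1.const_mul (m * A))
      refine HasDerivAt.congr_deriv (f := fun x => (Real.log x - Real.log a) ^ 2 * ((B - m * A) / (2 * D))
        + m * A * (Real.log x - Real.log a)) h2 ?_
      simp only [hg, ht]; field_simp; push_cast; ring
    · apply ContinuousOn.intervalIntegrable
      rw [huIcc]; exact hgxc
  rw [I1, I2] at step3
  have hS0 : 0 ≤ B + m * A := by positivity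
  have hfin : (1/2) * ((D * L (a ^ (3 * p)) (b ^ (3 * p))) ^ (1/p) * (D / 2 * (B + m * A)) ^ (1/q))
      = D / 2 ^ (1 + 1/q) * L (a ^ (3 * p)) (b ^ (3 * p)) ^ (1 - 1/q) * (B + m * A) ^ (1/q) := by
    rw [Real.mul_rpow hD0.le hLpos, Real.mul_rpow (by positivity) hS0,
      Real.div_rpow hD0.le (by norm_num), hpinv, Real.rpow_add (by norm_num : (0:ℝ) < 2),
      Real.rpow_one, Real.rpow_sub hD0, Real.rpow_one]
    have h1 : D ^ (1/q) ≠ 0 := (Real.rpow_pos_of_pos hD0 _).ne'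
    have h2 : (2:ℝ) ^ (1/q) ≠ 0 := (Real.rpow_pos_of_pos (by norm_num) _).ne'
    generalize D ^ (1/q) = u at *
    generalize (2:ℝ) ^ (1/q) = v at *
    generalize L (a ^ (3 * p)) (b ^ (3 * p)) ^ (1 - 1/q) = w at *
    generalize (B + m * A) ^ (1/q) = z at *
    field_simp
  rw [hparts, abs_mul, abs_of_pos (by norm_num : (0:ℝ) < 1/2), ← hfin]
  refine mul_le_mul_of_nonneg_left ?_ (by norm_num)
  exact step1.trans (step2.le.trans step3)
end

section
/- Let f : [0,∞) → ℝ be differentiable with f' Lebesgue integrable on [a,b], where 0 < a < b < ∞. Let (α,m) ∈ (0,1]² and q > 1. If |f'|^q is (α,m)-GA-convex on [0, max{a^{1/m}, b}], then |(b²·f(b) − a²·f(a))/2 − ∫_a^b x·f(x) dx| ≤ ((ln b − ln a)/2) · { m·[L(a^{3q}, b^{3q}) − G(α,3q)]·|f'(a^{1/m})|^q + G(α,3q)·|f'(b)|^q }^{1/q}. -/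
open Real MeasureTheory Set

theorem stmt_8 (f f' : ℝ → ℝ) (a b α m q : ℝ) (ha : 0 < a) (hab : a < b)
    (hα : α ∈ Ioc (0:ℝ) 1) (hm : m ∈ Ioc (0:ℝ) 1) (hq : 1 < q)
    (hderiv : ∀ x ∈ Ici (0:ℝ), HasDerivAt f (f' x) x)
    (hint : IntervalIntegrable f' volume a b)
    (hconv : GAConvexOn α m (max (a ^ (1/m)) b) (fun x => |f' x| ^ q)) :
    |(b ^ 2 * f b - a ^ 2 * f a) / 2 - ∫ x in a..b, x * f x| ≤
      ((Real.log b - Real.log a) / 2) *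
        (m * (L (a ^ (3 * q)) (b ^ (3 * q)) - G a b α (3 * q)) * |f' (a ^ (1/m))| ^ q +
          G a b α (3 * q) * |f' b| ^ q) ^ (1/q) := by
  have hb : 0 < b := ha.trans hab
  have hq0 : 0 < q := by linarith
  have hm0 : 0 < m := hm.1
  have hα0 : 0 < α := hα.1
  set c : ℝ := Real.log b - Real.log a with hc
  have hcpos : 0 < c := sub_pos.2 (Real.log_lt_log ha hab)
  set A : ℝ := |f' (a ^ (1/m))| ^ q with hA
  set B : ℝ := |f' b| ^ q with hB
  set g : ℝ → ℝ := fun t => Real.exp (Real.log a + t * c) with hg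
  have hgpos : ∀ t, 0 < g t := fun t => Real.exp_pos _
  have hg0 : g 0 = a := by simp [hg, Real.exp_log ha]
  have hg1 : g 1 = b := by simp [hg, hc, Real.exp_log hb]
  have hgd : ∀ t, HasDerivAt g (g t * c) t := by
    intro t
    have := (((hasDerivAt_id t).mul_const c).const_add (Real.log a)).exp
    simpa [hg] using this
  have hgc : Continuous g := by rw [hg]; fun_prop
  have hgeq : ∀ t, g t = b ^ t * a ^ (1 - t) := by
    intro t
    rw [Real.rpow_def_of_pos hb, Real.rpow_def_of_pos ha, ← Real.exp_add, hg]
    simp only [hc]; congr 1; ring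
  have hgq : ∀ t, g t ^ (3 * q) = a ^ (3 * q * (1 - t)) * b ^ (3 * q * t) := by
    intro t
    rw [Real.rpow_def_of_pos hb, Real.rpow_def_of_pos ha, ← Real.exp_add,
      Real.rpow_def_of_pos (hgpos t), hg]
    simp only [hc, Real.log_exp]; congr 1; ring
  set H : ℝ → ℝ := fun t => g t ^ (3 * q) * (t ^ α * B + m * (1 - t ^ α) * A) with hH
  have hpc : Continuous fun t : ℝ => t ^ α := Real.continuous_rpow_const hα0.le
  have hgqc : Continuous fun t : ℝ => g t ^ (3 * q) :=
    hgc.rpow_const fun t => Or.inl (hgpos t).ne'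
  have hHc : Continuous H := by rw [hH]; fun_prop
  have hconv' : ∀ t ∈ Icc (0:ℝ) 1, |f' (g t)| ^ q ≤ t ^ α * B + m * (1 - t ^ α) * A := by
    intro t ht
    have h := hconv b ⟨hb.le, le_max_right _ _⟩ (a ^ (1/m))
      ⟨(Real.rpow_pos_of_pos ha _).le, le_max_left _ _⟩ t ht
    have e : (a ^ (1/m)) ^ (m * (1 - t)) = a ^ (1 - t) := by
      rw [← Real.rpow_mul ha.le]; congr 1; field_simp
    rw [e, ← hgeq] at h
    exact h
  have hpt : ∀ t ∈ Icc (0:ℝ) 1, (g t ^ 3 * |f' (g t)|) ^ q ≤ H t := by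
    intro t ht
    rw [Real.mul_rpow (by have := hgpos t; positivity) (abs_nonneg _), ← Real.rpow_natCast,
      ← Real.rpow_mul (hgpos t).le]
    exact mul_le_mul_of_nonneg_left (hconv' t ht) (Real.rpow_pos_of_pos (hgpos t) _).le
  have hH0 : ∀ t ∈ Icc (0:ℝ) 1, 0 ≤ H t := fun t ht =>
    le_trans (Real.rpow_nonneg (by have := hgpos t; positivity) _) (hpt t ht)
  have hpt' : ∀ t ∈ Icc (0:ℝ) 1, g t ^ 3 * |f' (g t)| ≤ H t ^ (1/q) := by
    intro t ht
    have h0 : 0 ≤ g t ^ 3 * |f' (g t)| := by have := hgpos t; positivity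
    have := Real.rpow_le_rpow (Real.rpow_nonneg h0 q) (hpt t ht) (z := 1/q) (by positivity)
    rwa [← Real.rpow_mul h0, mul_one_div_cancel hq0.ne', Real.rpow_one] at this
  have hHqc : Continuous fun t => H t ^ (1/q) :=
    hHc.rpow_const fun t => Or.inr (by positivity)
  -- integral of H
  have hI1 : ∫ t in (0:ℝ)..1, g t ^ (3 * q) = L (a ^ (3 * q)) (b ^ (3 * q)) := by
    have hd : ∀ t ∈ uIcc (0:ℝ) 1, HasDerivAt (fun t => g t ^ (3 * q) / (3 * q * c))
        (g t ^ (3 * q)) t := by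
      intro t _
      have h := ((hgd t).rpow_const (p := 3 * q) (Or.inl (hgpos t).ne')).div_const (3 * q * c)
      refine h.congr_deriv ?_
      rw [Real.rpow_sub_one (hgpos t).ne']
      have := (hgpos t).ne'
      field_simp
    rw [intervalIntegral.integral_eq_sub_of_hasDerivAt hd (hgqc.intervalIntegrable _ _), hg0, hg1,
      L, Real.log_rpow ha, Real.log_rpow hb, ← mul_sub, ← hc, sub_div]
  have hI2 : ∫ t in (0:ℝ)..1, t ^ α * g t ^ (3 * q) = G a b α (3 * q) := by
    rw [G]; congr 1; ext t; rw [hgq]; ring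
  have hIH : ∫ t in (0:ℝ)..1, H t =
      m * (L (a ^ (3 * q)) (b ^ (3 * q)) - G a b α (3 * q)) * A + G a b α (3 * q) * B := by
    have e : H = fun t => (m * A) * g t ^ (3 * q) + (B - m * A) * (t ^ α * g t ^ (3 * q)) := by
      ext t; simp only [hH]; ring
    rw [e, intervalIntegral.integral_add, intervalIntegral.integral_const_mul,
      intervalIntegral.integral_const_mul, hI1, hI2]
    · ring
    · exact (continuous_const.mul hgqc).intervalIntegrable _ _
    · exact (continuous_const.mul (hpc.mul hgqc)).intervalIntegrable _ _
  -- Jensen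
  have hJ : ∫ t in (0:ℝ)..1, H t ^ (1/q) ≤ (∫ t in (0:ℝ)..1, H t) ^ (1/q) := by
    rw [intervalIntegral.integral_of_le zero_le_one, intervalIntegral.integral_of_le zero_le_one]
    have : IsProbabilityMeasure (volume.restrict (Ioc (0:ℝ) 1)) := ⟨by simp⟩
    have hcc : ConcaveOn ℝ (Ici (0:ℝ)) fun x : ℝ => x ^ (1/q) :=
      Real.concaveOn_rpow (by positivity) (by rw [div_le_one hq0]; exact hq.le)
    refine hcc.le_map_integral (Real.continuous_rpow_const (by positivity)).continuousOn
      isClosed_Ici ?_ ?_ ?_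
    · filter_upwards [ae_restrict_mem measurableSet_Ioc] with t ht
      exact hH0 t ⟨ht.1.le, ht.2⟩
    · exact (hHc.intervalIntegrable 0 1).1
    · exact (hHqc.intervalIntegrable 0 1).1
  -- FTC bound
  set Φ : ℝ → ℝ := fun t => ((g t) ^ 2 * f (g t) - a ^ 2 * f a) / 2 - ∫ x in a..(g t), x * f x
    with hΦ
  have hfc : ContinuousOn (fun x => x * f x) (Ioi 0) := fun x hx =>
    (continuousAt_id.mul (hderiv x (mem_Ici.2 (le_of_lt (mem_Ioi.1 hx)))).continuousAt).continuousWithinAt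
  have hΦd : ∀ t, HasDerivAt Φ (c / 2 * (g t ^ 3 * f' (g t))) t := by
    intro t
    have hft := hderiv (g t) (hgpos t).le
    have h1 : HasDerivAt (fun u => ∫ x in a..u, x * f x) (g t * f (g t)) (g t) := by
      refine intervalIntegral.integral_hasDerivAt_right ?_ ?_ ?_
      · refine (hfc.mono ?_).intervalIntegrable
        intro x hx
        exact lt_of_lt_of_le (lt_min ha (hgpos t)) hx.1
      · exact hfc.stronglyMeasurableAtFilter isOpen_Ioi _ (hgpos t)
      · exact hfc.continuousAt (Ioi_mem_nhds (hgpos t))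
    have h2 := h1.comp t (hgd t)
    have h3 := hft.comp t (hgd t)
    have h4 := (((((hgd t).pow 2).mul h3).sub_const (a ^ 2 * f a)).div_const 2).sub h2
    refine h4.congr_deriv ?_
    simp only [Function.comp, Pi.pow_apply]
    push_cast
    ring
  have hBd : ∀ t, HasDerivAt (fun t => c / 2 * ∫ s in (0:ℝ)..t, H s ^ (1/q))
      (c / 2 * H t ^ (1/q)) t := fun t =>
    (intervalIntegral.integral_hasDerivAt_right (hHqc.intervalIntegrable _ _)
      (hHqc.stronglyMeasurableAtFilter _ _) hHqc.continuousAt).const_mul _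
  have key := image_norm_le_of_norm_deriv_right_le_deriv_boundary (a := 0) (b := 1)
    (f := Φ) (f' := fun t => c / 2 * (g t ^ 3 * f' (g t)))
    (fun t _ => (hΦd t).continuousAt.continuousWithinAt)
    (fun t _ => (hΦd t).hasDerivWithinAt)
    (B := fun t => c / 2 * ∫ s in (0:ℝ)..t, H s ^ (1/q)) (by simp [hΦ, hg0]) hBd
    (by
      intro t ht
      have h := hpt' t ⟨ht.1, ht.2.le⟩
      have h3 : 0 < g t ^ 3 := pow_pos (hgpos t) 3
      rw [Real.norm_eq_abs, abs_mul, abs_mul, abs_of_pos h3, abs_of_pos (half_pos hcpos)]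
      exact mul_le_mul_of_nonneg_left h (half_pos hcpos).le)
    (right_mem_Icc.2 zero_le_one)
  simp only [hΦ, hg1, Real.norm_eq_abs] at key
  refine key.trans ?_
  rw [← hIH]
  exact mul_le_mul_of_nonneg_left hJ (half_pos hcpos).le
end

section
/- Let f : [0,∞) → ℝ be differentiable with f' Lebesgue integrable on [a,b], where 0 < a < b < ∞. Let m ∈ (0,1] and q > 1. If |f'|^q is (1,m)-GA-convex on [0, max{a^{1/m}, b}], then |(b²·f(b) − a²·f(a))/2 − ∫_a^b x·f(x) dx| ≤ ((ln b − ln a)^{1−1/q}/2) · (1/(3q))^{1/q} · { m·[L(a^{3q}, b^{3q}) − a^{3q}]·|f'(a^{1/m})|^q + [b^{3q} − L(a^{3q}, b^{3q})]·|f'(b)|^q }^{1/q}. -/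
open Real MeasureTheory Set

theorem holder_interval {a b p q : ℝ} (hab : a ≤ b) (hpq : p.HolderConjugate q) {F H : ℝ → ℝ}
    (hF : ContinuousOn F (Icc a b)) (hH : ContinuousOn H (Icc a b))
    (hF0 : ∀ x ∈ Icc a b, 0 ≤ F x) (hH0 : ∀ x ∈ Icc a b, 0 ≤ H x) :
    ∫ x in a..b, F x * H x ≤
      (∫ x in a..b, F x ^ p) ^ (1/p) * (∫ x in a..b, H x ^ q) ^ (1/q) := by
  have key : ∀ {K : ℝ → ℝ} (r : ENNReal), ContinuousOn K (Icc a b) →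
      MemLp K r (volume.restrict (Ioc a b)) := by
    intro K r hK
    obtain ⟨C, hC⟩ := isCompact_Icc.exists_bound_of_continuousOn hK
    refine MemLp.of_bound ((hK.mono Ioc_subset_Icc_self).aestronglyMeasurable measurableSet_Ioc) C ?_
    exact (ae_restrict_iff' measurableSet_Ioc).2
      (Filter.Eventually.of_forall fun x hx => hC x (Ioc_subset_Icc_self hx))
  simp only [intervalIntegral.integral_of_le hab]
  refine integral_mul_le_Lp_mul_Lq_of_nonneg hpq ?_ ?_ (key _ hF) (key _ hH)
  · exact (ae_restrict_iff' measurableSet_Ioc).2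
      (Filter.Eventually.of_forall fun x hx => hF0 x (Ioc_subset_Icc_self hx))
  · exact (ae_restrict_iff' measurableSet_Ioc).2
      (Filter.Eventually.of_forall fun x hx => hH0 x (Ioc_subset_Icc_self hx))

theorem parts_identity (f f' : ℝ → ℝ) (a b : ℝ) (hab : a < b)
    (hderiv : ∀ x ∈ Icc a b, HasDerivAt f (f' x) x)
    (hint : IntervalIntegrable f' volume a b) :
    (b ^ 2 * f b - a ^ 2 * f a) / 2 - ∫ x in a..b, x * f x
      = (∫ x in a..b, x ^ 2 * f' x) / 2 := by
  have hu : uIcc a b = Icc a b := uIcc_of_le hab.le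
  have hfc : ContinuousOn f (uIcc a b) := by
    rw [hu]; exact fun x hx => (hderiv x hx).continuousAt.continuousWithinAt
  have h1 : IntervalIntegrable (fun x => x * f x) volume a b :=
    (continuousOn_id.mul hfc).intervalIntegrable
  have h2 : IntervalIntegrable (fun x => x ^ 2 * f' x) volume a b :=
    hint.continuousOn_mul (by fun_prop)
  have h := intervalIntegral.integral_eq_sub_of_hasDerivAt (a := a) (b := b)
    (f := fun x => x ^ 2 * f x) (f' := fun x => 2 * (x * f x) + x ^ 2 * f' x)
    (by
      intro x hx
      rw [hu] at hx
      have := (hasDerivAt_pow 2 x).mul (hderiv x hx)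
      convert! this using 1
      simp; ring) ((h1.const_mul 2).add h2)
  rw [intervalIntegral.integral_add (h1.const_mul 2) h2, intervalIntegral.integral_const_mul] at h
  linarith

theorem weight_integral (a b A B s : ℝ) (ha : 0 < a) (hab : a < b) (hs : 0 < s) :
    ∫ x in a..b, x ^ (s - 1) * ((Real.log x - Real.log a) / (Real.log b - Real.log a) * B
        + (1 - (Real.log x - Real.log a) / (Real.log b - Real.log a)) * A)
      = 1 / s * ((L (a ^ s) (b ^ s) - a ^ s) * A + (b ^ s - L (a ^ s) (b ^ s)) * B) := by
  have hD : 0 < Real.log b - Real.log a := sub_pos.2 (Real.log_lt_log ha hab)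
  have hb : 0 < b := ha.trans hab
  have hu : uIcc a b = Icc a b := uIcc_of_le hab.le
  have hpos : ∀ x ∈ uIcc a b, 0 < x := fun x hx => by rw [hu] at hx; exact ha.trans_le hx.1
  rw [intervalIntegral.integral_eq_sub_of_hasDerivAt (f := fun x =>
    x ^ s / s * A + (B - A) / (Real.log b - Real.log a) *
      (x ^ s / s * (Real.log x - Real.log a) - x ^ s / (s * s)))]
  · simp only [L, Real.log_rpow ha, Real.log_rpow hb]
    have : s * Real.log b - s * Real.log a ≠ 0 := by
      rw [← mul_sub]; positivity
    have h3 : s * Real.log b - s * Real.log a = s * (Real.log b - Real.log a) := by ring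
    rw [h3]
    generalize Real.log b - Real.log a = D at *
    field_simp
    ring
  · intro x hx
    have hx0 := hpos x hx
    have hr : HasDerivAt (fun x : ℝ => x ^ s) (s * x ^ (s - 1)) x :=
      Real.hasDerivAt_rpow_const (Or.inl hx0.ne')
    have hl : HasDerivAt (fun x => Real.log x - Real.log a) x⁻¹ x :=
      (Real.hasDerivAt_log hx0.ne').sub_const _
    have hh := ((hr.div_const s).mul_const A).add
      ((((hr.div_const s).mul hl).sub (hr.div_const (s * s))).const_mul
        ((B - A) / (Real.log b - Real.log a)))
    convert! hh using 1
    have : x ^ s = x ^ (s - 1) * x := by rw [Real.rpow_sub_one hx0.ne']; field_simp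
    rw [this]
    field_simp
    ring
  · apply ContinuousOn.intervalIntegrable
    intro x hx
    have hx0 := hpos x hx
    apply ContinuousAt.continuousWithinAt
    have := Real.continuousAt_log hx0.ne'
    have := Real.continuousAt_rpow_const x (s - 1) (Or.inl hx0.ne')
    fun_prop

theorem stmt_9 (f f' : ℝ → ℝ) (a b m q : ℝ) (ha : 0 < a) (hab : a < b)
    (hm : m ∈ Ioc (0:ℝ) 1) (hq : 1 < q)
    (hderiv : ∀ x ∈ Ici (0:ℝ), HasDerivAt f (f' x) x)
    (hint : IntervalIntegrable f' volume a b)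
    (hconv : GAConvexOn 1 m (max (a ^ (1/m)) b) (fun x => |f' x| ^ q)) :
    |(b ^ 2 * f b - a ^ 2 * f a) / 2 - ∫ x in a..b, x * f x| ≤
      ((Real.log b - Real.log a) ^ (1 - 1/q) / 2) * (1 / (3 * q)) ^ (1/q) *
        (m * (L (a ^ (3 * q)) (b ^ (3 * q)) - a ^ (3 * q)) * |f' (a ^ (1/m))| ^ q +
          (b ^ (3 * q) - L (a ^ (3 * q)) (b ^ (3 * q))) * |f' b| ^ q) ^ (1/q) := by
  obtain ⟨hm0, hm1⟩ := hm
  have hb : 0 < b := ha.trans hab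
  have hq0 : 0 < q := by linarith
  have hD : 0 < Real.log b - Real.log a := sub_pos.2 (Real.log_lt_log ha hab)
  have hpos : ∀ x ∈ Icc a b, 0 < x := fun x hx => ha.trans_le hx.1
  set A := |f' (a ^ (1/m))| ^ q with hA
  set B := |f' b| ^ q with hB
  have hA0 : 0 ≤ A := by positivity
  have hB0 : 0 ≤ B := by positivity
  set g : ℝ → ℝ := fun x => (Real.log x - Real.log a) / (Real.log b - Real.log a) * B
        + (1 - (Real.log x - Real.log a) / (Real.log b - Real.log a)) * (m * A) with hg
  have hl : ∀ x ∈ Icc a b,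
      (Real.log x - Real.log a) / (Real.log b - Real.log a) ∈ Icc (0:ℝ) 1 := by
    intro x hx
    have h1 := Real.log_le_log ha hx.1
    have h2 := Real.log_le_log (hpos x hx) hx.2
    exact ⟨div_nonneg (by linarith) hD.le, (div_le_one hD).2 (by linarith)⟩
  have hg0 : ∀ x ∈ Icc a b, 0 ≤ g x := by
    intro x hx
    obtain ⟨h1, h2⟩ := hl x hx
    have : 0 ≤ 1 - (Real.log x - Real.log a) / (Real.log b - Real.log a) := by linarith
    simp only [hg]
    positivity
  have hgc : ContinuousOn g (Icc a b) := by
    intro x hx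
    have := Real.continuousAt_log (hpos x hx).ne'
    apply ContinuousAt.continuousWithinAt
    simp only [hg]
    fun_prop
  have hpt : ∀ x ∈ Icc a b, |f' x| ≤ g x ^ (1/q) := by
    intro x hx
    have hx0 := hpos x hx
    have h := hconv b ⟨hb.le, le_max_right _ _⟩ (a ^ (1/m)) ⟨by positivity, le_max_left _ _⟩ _ (hl x hx)
    simp only [Real.rpow_one] at h
    set l := (Real.log x - Real.log a) / (Real.log b - Real.log a) with hldef
    have hx' : b ^ l * (a ^ (1/m)) ^ (m * (1 - l)) = x := by
      rw [← Real.rpow_mul ha.le, show 1/m * (m * (1 - l)) = 1 - l by field_simp,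
        Real.rpow_def_of_pos hb, Real.rpow_def_of_pos ha, ← Real.exp_add]
      rw [show Real.log b * l + Real.log a * (1 - l) = Real.log x from ?_, Real.exp_log hx0]
      have : l * (Real.log b - Real.log a) = Real.log x - Real.log a := by
        rw [hldef]; field_simp
      linarith
    rw [hx'] at h
    have h' : |f' x| ^ q ≤ g x := by
      refine h.trans (le_of_eq ?_)
      simp only [hg, hA, hB, ← hldef]; ring
    calc |f' x| = (|f' x| ^ q) ^ (1/q) := by
          rw [← Real.rpow_mul (abs_nonneg _), mul_one_div_cancel hq0.ne', Real.rpow_one]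
      _ ≤ _ := Real.rpow_le_rpow (by positivity) h' (by positivity)
  have hpq : (q / (q - 1)).HolderConjugate q := (Real.HolderConjugate.conjExponent hq).symm
  have hp : 1 / (q / (q - 1)) = 1 - 1/q := by
    have : q - 1 ≠ 0 := by linarith
    field_simp
  have hcr : ∀ r : ℝ, ContinuousOn (fun x : ℝ => x ^ r) (Icc a b) := fun r x hx =>
    (Real.continuousAt_rpow_const x r (Or.inl (hpos x hx).ne')).continuousWithinAt
  have hgq : ContinuousOn (fun x => g x ^ (1/q)) (Icc a b) :=
    hgc.rpow_const fun x _ => Or.inr (by positivity)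
  have hold := holder_interval hab.le hpq (F := fun x => x ^ (-(1 - 1/q)))
    (H := fun x => x ^ (3 - 1/q) * g x ^ (1/q)) (hcr _) ((hcr _).mul hgq)
    (fun x hx => (Real.rpow_pos_of_pos (hpos x hx) _).le)
    (fun x hx => mul_nonneg (Real.rpow_pos_of_pos (hpos x hx) _).le
      (Real.rpow_nonneg (hg0 x hx) _))
  have hu : uIcc a b = Icc a b := uIcc_of_le hab.le
  have e1 : ∫ x in a..b, x ^ (-(1 - 1/q)) * (x ^ (3 - 1/q) * g x ^ (1/q))
      = ∫ x in a..b, x ^ 2 * g x ^ (1/q) := by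
    apply intervalIntegral.integral_congr
    intro x hx
    rw [hu] at hx
    simp only
    rw [← mul_assoc, ← Real.rpow_add (hpos x hx),
      show -(1 - 1/q) + (3 - 1/q) = ((2:ℕ):ℝ) by push_cast; ring, Real.rpow_natCast]
  have e2 : ∫ x in a..b, (x ^ (-(1 - 1/q))) ^ (q / (q - 1)) = Real.log b - Real.log a := by
    rw [← Real.log_div hb.ne' ha.ne', ← integral_inv_of_pos ha hb]
    apply intervalIntegral.integral_congr
    intro x hx
    rw [hu] at hx
    have : q - 1 ≠ 0 := by linarith
    simp only
    rw [← Real.rpow_mul (hpos x hx).le, show -(1 - 1/q) * (q / (q-1)) = -1 by field_simp,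
      Real.rpow_neg_one]
  have e3 : ∫ x in a..b, (x ^ (3 - 1/q) * g x ^ (1/q)) ^ q
      = ∫ x in a..b, x ^ (3 * q - 1) * g x := by
    apply intervalIntegral.integral_congr
    intro x hx
    rw [hu] at hx
    have hx0 := hpos x hx
    simp only
    rw [Real.mul_rpow (by positivity) (Real.rpow_nonneg (hg0 x hx) _), ← Real.rpow_mul hx0.le,
      ← Real.rpow_mul (hg0 x hx), one_div_mul_cancel hq0.ne', Real.rpow_one,
      show (3 - 1/q) * q = 3 * q - 1 by field_simp]
  have e4 := weight_integral a b (m * A) B (3 * q) ha hab (by positivity)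
  have hI0 : 0 ≤ ∫ x in a..b, x ^ (3 * q - 1) * g x :=
    intervalIntegral.integral_nonneg hab.le fun x hx =>
      mul_nonneg (Real.rpow_pos_of_pos (hpos x hx) _).le (hg0 x hx)
  rw [e1, e2, e3, hp] at hold
  change (∫ x in a..b, x ^ (3 * q - 1) * g x) = _ at e4
  have hS : (L (a ^ (3 * q)) (b ^ (3 * q)) - a ^ (3 * q)) * (m * A) +
      (b ^ (3 * q) - L (a ^ (3 * q)) (b ^ (3 * q))) * B
      = m * (L (a ^ (3 * q)) (b ^ (3 * q)) - a ^ (3 * q)) * A +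
          (b ^ (3 * q) - L (a ^ (3 * q)) (b ^ (3 * q))) * B := by ring
  rw [hS] at e4
  set S := m * (L (a ^ (3 * q)) (b ^ (3 * q)) - a ^ (3 * q)) * A +
          (b ^ (3 * q) - L (a ^ (3 * q)) (b ^ (3 * q))) * B with hSdef
  have hS0 : 0 ≤ S := by
    rw [e4] at hI0
    exact nonneg_of_mul_nonneg_right hI0 (by positivity)
  rw [e4, Real.mul_rpow (by positivity) hS0] at hold
  rw [parts_identity f f' a b hab (fun x hx => hderiv x (hpos x hx).le) hint, abs_div, abs_two]
  have hbd : |∫ x in a..b, x ^ 2 * f' x| ≤ ∫ x in a..b, x ^ 2 * g x ^ (1/q) := by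
    rw [← Real.norm_eq_abs]
    refine intervalIntegral.norm_integral_le_of_norm_le hab.le
      (Filter.Eventually.of_forall fun x hx => ?_) ?_
    · rw [Real.norm_eq_abs, abs_mul, abs_of_nonneg (sq_nonneg x)]
      exact mul_le_mul_of_nonneg_left (hpt x (Ioc_subset_Icc_self hx)) (sq_nonneg x)
    · apply ContinuousOn.intervalIntegrable
      rw [hu]
      exact (continuousOn_pow 2).mul hgq
  have := hbd.trans hold
  linarith
end

section
/- Let f : [0,∞) → ℝ be differentiable with f' Lebesgue integrable on [a,b], where 0 < a < b < ∞. Let (α,m) ∈ (0,1]², q > 1, and 0 < p < q. If |f'|^q is (α,m)-GA-convex on [0, max{a^{1/m}, b}], then |(b²·f(b) − a²·f(a))/2 − ∫_a^b x·f(x) dx| ≤ ((ln b − ln a)/2) · [L(a^{3(q−p)/(q−1)}, b^{3(q−p)/(q−1)})]^{1−1/q} · { m·[L(a^{3p}, b^{3p}) − G(α,3p)]·|f'(a^{1/m})|^q + G(α,3p)·|f'(b)|^q }^{1/q}. -/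
open Real MeasureTheory Set

/-- The geometric path from `a` to `b`. -/
noncomputable def gpath (a b t : ℝ) : ℝ := Real.exp (Real.log a * (1 - t) + Real.log b * t)

lemma gpath_pos (a b t : ℝ) : 0 < gpath a b t := Real.exp_pos _

lemma gpath_cont (a b : ℝ) : Continuous (gpath a b) := by
  unfold gpath; fun_prop

lemma gpath_hasDeriv (a b t : ℝ) :
    HasDerivAt (gpath a b) ((Real.log b - Real.log a) * gpath a b t) t := by
  unfold gpath
  have h : HasDerivAt (fun t => Real.log a * (1 - t) + Real.log b * t)
      (Real.log a * (-1) + Real.log b * 1) t :=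
    (((hasDerivAt_id t).const_sub 1).const_mul _).add ((hasDerivAt_id t).const_mul _)
  convert h.exp using 1
  ring

lemma gpath_zero {a b : ℝ} (ha : 0 < a) : gpath a b 0 = a := by
  simp [gpath, Real.exp_log ha]

lemma gpath_one {a b : ℝ} (hb : 0 < b) : gpath a b 1 = b := by
  simp [gpath, Real.exp_log hb]

lemma gpath_rpow {a b : ℝ} (ha : 0 < a) (hb : 0 < b) (s t : ℝ) :
    gpath a b t ^ s = a ^ (s * (1 - t)) * b ^ (s * t) := by
  rw [gpath, ← Real.exp_mul, Real.rpow_def_of_pos ha, Real.rpow_def_of_pos hb, ← Real.exp_add]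
  congr 1; ring

lemma gpath_rpow_cont (a b s : ℝ) : Continuous (fun t => gpath a b t ^ s) :=
  (gpath_cont a b).rpow_const (fun t => Or.inl (gpath_pos a b t).ne')

lemma integral_gpath_rpow {a b : ℝ} (ha : 0 < a) (hab : a < b) {s : ℝ} (hs : 0 < s) :
    ∫ t in (0:ℝ)..1, gpath a b t ^ s = L (a ^ s) (b ^ s) := by
  have hb := ha.trans hab
  have hl : 0 < Real.log b - Real.log a := sub_pos.2 (Real.log_lt_log ha hab)
  have hd : ∀ t ∈ uIcc (0:ℝ) 1, HasDerivAt
      (fun t => gpath a b t ^ s / (s * (Real.log b - Real.log a))) (gpath a b t ^ s) t := by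
    intro t _
    have h := ((gpath_hasDeriv a b t).rpow_const (p := s)
      (Or.inl (gpath_pos a b t).ne')).div_const (s * (Real.log b - Real.log a))
    refine h.congr_deriv ?_
    rw [Real.rpow_sub_one (gpath_pos a b t).ne']
    have := (gpath_pos a b t).ne'
    field_simp
  rw [intervalIntegral.integral_eq_sub_of_hasDerivAt hd
    ((gpath_rpow_cont a b s).intervalIntegrable _ _), gpath_zero ha, gpath_one hb, L,
    Real.log_rpow ha, Real.log_rpow hb]
  rw [← sub_div, mul_sub]

lemma identity (f f' : ℝ → ℝ) (a b : ℝ) (ha : 0 < a) (hab : a < b)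
    (hderiv : ∀ x ∈ Ici (0:ℝ), HasDerivAt f (f' x) x)
    (hi : IntervalIntegrable (fun t => f' (gpath a b t)) volume 0 1) :
    (b ^ 2 * f b - a ^ 2 * f a) / 2 - ∫ x in a..b, x * f x =
      (Real.log b - Real.log a) / 2 * ∫ t in (0:ℝ)..1, gpath a b t ^ 3 * f' (gpath a b t) := by
  have hb := ha.trans hab
  set v := Real.log b - Real.log a with hv
  have hfg : ∀ t, HasDerivAt (fun t => f (gpath a b t))
      (f' (gpath a b t) * (v * gpath a b t)) t := fun t =>
    (hderiv _ (gpath_pos a b t).le).comp t (gpath_hasDeriv a b t)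
  have hfc : Continuous (fun t => f (gpath a b t)) :=
    continuous_iff_continuousAt.2 fun t => (hfg t).continuousAt
  have hgc := gpath_cont a b
  have hsub : ∫ t in (0:ℝ)..1, v * (gpath a b t ^ 2 * f (gpath a b t)) =
      ∫ x in a..b, x * f x := by
    have h := intervalIntegral.integral_comp_mul_deriv'' (a := 0) (b := 1) (f := gpath a b)
      (f' := fun t => v * gpath a b t) (g := fun x => x * f x) hgc.continuousOn
      (fun t _ => (gpath_hasDeriv a b t).hasDerivWithinAt) (by fun_prop) (by
        rintro x ⟨t, _, rfl⟩
        exact (continuousAt_id.mul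
          (hderiv _ (gpath_pos a b t).le).continuousAt).continuousWithinAt)
    rw [gpath_zero ha, gpath_one hb] at h
    rw [← h]
    congr 1; ext t; simp only [Function.comp]; ring
  have hi3 : IntervalIntegrable (fun t => gpath a b t ^ 3 * f' (gpath a b t)) volume 0 1 :=
    hi.continuousOn_mul (by fun_prop)
  have hc : IntervalIntegrable (fun t => v * (gpath a b t ^ 2 * f (gpath a b t))) volume 0 1 :=
    (continuous_const.mul ((hgc.pow 2).mul hfc)).intervalIntegrable _ _
  have hF : ∀ t ∈ uIcc (0:ℝ) 1, HasDerivAt (fun t => gpath a b t ^ 2 * f (gpath a b t) / 2)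
      (v * (gpath a b t ^ 2 * f (gpath a b t)) +
        v / 2 * (gpath a b t ^ 3 * f' (gpath a b t))) t := by
    intro t _
    refine ((((gpath_hasDeriv a b t).fun_pow 2).fun_mul (hfg t)).div_const 2).congr_deriv ?_
    push_cast
    ring
  have h := intervalIntegral.integral_eq_sub_of_hasDerivAt hF (hc.add (hi3.const_mul _))
  rw [intervalIntegral.integral_add hc (hi3.const_mul _), hsub,
    intervalIntegral.integral_const_mul, gpath_zero ha, gpath_one hb] at h
  linarith

theorem stmt_10 (f f' : ℝ → ℝ) (a b α m p q : ℝ) (ha : 0 < a) (hab : a < b)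
    (hα : α ∈ Ioc (0:ℝ) 1) (hm : m ∈ Ioc (0:ℝ) 1) (hq : 1 < q) (hp : 0 < p) (hpq : p < q)
    (hderiv : ∀ x ∈ Ici (0:ℝ), HasDerivAt f (f' x) x)
    (hint : IntervalIntegrable f' volume a b)
    (hconv : GAConvexOn α m (max (a ^ (1/m)) b) (fun x => |f' x| ^ q)) :
    |(b ^ 2 * f b - a ^ 2 * f a) / 2 - ∫ x in a..b, x * f x| ≤
      ((Real.log b - Real.log a) / 2) *
        L (a ^ (3 * (q - p) / (q - 1))) (b ^ (3 * (q - p) / (q - 1))) ^ (1 - 1/q) *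
        (m * (L (a ^ (3 * p)) (b ^ (3 * p)) - G a b α (3 * p)) * |f' (a ^ (1/m))| ^ q +
          G a b α (3 * p) * |f' b| ^ q) ^ (1/q) := by
  have hb := ha.trans hab
  have hl : 0 < Real.log b - Real.log a := sub_pos.2 (Real.log_lt_log ha hab)
  have hm0 := hm.1
  have hq0 : 0 < q := by linarith
  have hq1 : 0 < q - 1 := by linarith
  set A := |f' (a ^ (1/m))| ^ q with hA
  set B := |f' b| ^ q with hB
  have hA0 : 0 ≤ A := by positivity
  have hB0 : 0 ≤ B := by positivity
  -- convexity
  have hcv : ∀ t ∈ Icc (0:ℝ) 1, |f' (gpath a b t)| ^ q ≤ t ^ α * B + m * (1 - t ^ α) * A := by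
    intro t ht
    have h := hconv b ⟨hb.le, le_max_right _ _⟩ (a ^ (1/m)) ⟨by positivity, le_max_left _ _⟩ t ht
    have e : b ^ t * (a ^ (1/m)) ^ (m * (1 - t)) = gpath a b t := by
      rw [← Real.rpow_mul ha.le, ← Real.rpow_one (gpath a b t), gpath_rpow ha hb,
        mul_comm (b ^ t)]
      congr 2
      · field_simp
      · ring
    simp only [e] at h
    exact h
  have hta : ∀ t ∈ Icc (0:ℝ) 1, 0 ≤ t ^ α ∧ t ^ α ≤ 1 := fun t ht =>
    ⟨Real.rpow_nonneg ht.1 _, Real.rpow_le_one ht.1 ht.2 hα.1.le⟩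
  have hbd : ∀ t ∈ Icc (0:ℝ) 1, |f' (gpath a b t)| ≤ (B + m * A) ^ (1/q) := by
    intro t ht
    obtain ⟨h0, h1⟩ := hta t ht
    have h2 : |f' (gpath a b t)| ^ q ≤ B + m * A := by
      refine (hcv t ht).trans ?_
      have := mul_nonneg hm0.le hA0
      nlinarith
    have h3 := Real.rpow_le_rpow (by positivity) h2 (by positivity : 0 ≤ 1 / q)
    rwa [← Real.rpow_mul (abs_nonneg _), mul_one_div_cancel hq0.ne', Real.rpow_one] at h3
  have hmeas : Measurable (fun t => f' (gpath a b t)) := by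
    have : (fun t => f' (gpath a b t)) = fun t => deriv f (gpath a b t) := by
      ext t; exact (hderiv _ (gpath_pos a b t).le).deriv.symm
    rw [this]
    exact (measurable_deriv f).comp (gpath_cont a b).measurable
  have hgm : Measurable (gpath a b) := (gpath_cont a b).measurable
  have hgle : ∀ s : ℝ, 0 < s → ∃ C, ∀ t ∈ Icc (0:ℝ) 1, gpath a b t ^ s ≤ C := by
    intro s _
    obtain ⟨C, hC⟩ := (isCompact_Icc (a := (0:ℝ)) (b := 1)).bddAbove_image
      (gpath_rpow_cont a b s).continuousOn
    exact ⟨C, fun t ht => hC ⟨t, ht, rfl⟩⟩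
  set μ := (volume : Measure ℝ).restrict (Ioc 0 1) with hμ
  have hae : ∀ᵐ t ∂μ, t ∈ Icc (0:ℝ) 1 := by
    rw [hμ]
    exact (ae_restrict_mem measurableSet_Ioc).mono fun t ht => Ioc_subset_Icc_self ht
  have hi : IntervalIntegrable (fun t => f' (gpath a b t)) volume 0 1 := by
    rw [intervalIntegrable_iff_integrableOn_Ioc_of_le zero_le_one]
    refine Integrable.of_bound (C := (B + m * A) ^ (1/q)) hmeas.aestronglyMeasurable ?_
    filter_upwards [hae] with t ht using hbd t ht
  rw [identity f f' a b ha hab hderiv hi, abs_mul, abs_of_pos (by positivity), mul_assoc]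
  refine mul_le_mul_of_nonneg_left ?_ (by positivity)
  -- Holder
  have hs1 : 0 < 3 * (q - p) / q := by
    have : 0 < q - p := by linarith
    positivity
  have hs2 : 0 < 3 * p / q := by positivity
  obtain ⟨C1, hC1⟩ := hgle _ hs1
  obtain ⟨C2, hC2⟩ := hgle _ hs2
  have hpq' : (q / (q - 1)).HolderConjugate q :=
    (Real.HolderConjugate.conjExponent hq).symm
  have hol := integral_mul_le_Lp_mul_Lq_of_nonneg (μ := μ) hpq'
    (f := fun t => gpath a b t ^ (3 * (q - p) / q))
    (g := fun t => gpath a b t ^ (3 * p / q) * |f' (gpath a b t)|)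
    (Filter.Eventually.of_forall fun t => Real.rpow_nonneg (gpath_pos a b t).le _)
    (Filter.Eventually.of_forall fun t =>
      mul_nonneg (Real.rpow_nonneg (gpath_pos a b t).le _) (abs_nonneg _))
    (by
      refine MemLp.of_bound (gpath_rpow_cont a b _).measurable.aestronglyMeasurable C1 ?_
      filter_upwards [hae] with t ht
      rw [Real.norm_of_nonneg (Real.rpow_nonneg (gpath_pos a b t).le _)]
      exact hC1 t ht)
    (by
      refine MemLp.of_bound (((gpath_rpow_cont a b _).measurable.mul
        (continuous_abs.measurable.comp hmeas)).aestronglyMeasurable)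
        (C2 * (B + m * A) ^ (1/q)) ?_
      filter_upwards [hae] with t ht
      have h0 := Real.rpow_nonneg (gpath_pos a b t).le (3 * p / q)
      rw [Real.norm_of_nonneg (mul_nonneg h0 (abs_nonneg _))]
      exact mul_le_mul (hC2 t ht) (hbd t ht) (abs_nonneg _) (h0.trans (hC2 t ht)))
  have e1 : ∀ t, gpath a b t ^ (3 * (q - p) / q) * (gpath a b t ^ (3 * p / q) * |f' (gpath a b t)|)
      = |gpath a b t ^ 3 * f' (gpath a b t)| := by
    intro t
    rw [← mul_assoc, ← Real.rpow_add (gpath_pos a b t), abs_mul,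
      abs_of_pos (pow_pos (gpath_pos a b t) 3)]
    have : 3 * (q - p) / q + 3 * p / q = (3 : ℕ) := by
      push_cast; field_simp; ring
    rw [this, Real.rpow_natCast]
  have e2 : ∀ t, (gpath a b t ^ (3 * (q - p) / q)) ^ (q / (q - 1))
      = gpath a b t ^ (3 * (q - p) / (q - 1)) := by
    intro t
    rw [← Real.rpow_mul (gpath_pos a b t).le]
    congr 1; field_simp
  have e3 : ∀ t, (gpath a b t ^ (3 * p / q) * |f' (gpath a b t)|) ^ q
      = gpath a b t ^ (3 * p) * |f' (gpath a b t)| ^ q := by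
    intro t
    rw [Real.mul_rpow (Real.rpow_nonneg (gpath_pos a b t).le _) (abs_nonneg _),
      ← Real.rpow_mul (gpath_pos a b t).le]
    congr 2; field_simp
  simp only [e1, e2, e3] at hol
  have e4 : 1 / (q / (q - 1)) = 1 - 1 / q := by field_simp
  rw [e4, hμ, ← intervalIntegral.integral_of_le zero_le_one,
    ← intervalIntegral.integral_of_le zero_le_one,
    ← intervalIntegral.integral_of_le zero_le_one,
    integral_gpath_rpow ha hab (by
      have : 0 < q - p := by linarith
      positivity)] at hol
  have hLnn : 0 ≤ L (a ^ (3 * (q - p) / (q - 1))) (b ^ (3 * (q - p) / (q - 1))) := by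
    rw [← integral_gpath_rpow ha hab (by
      have : 0 < q - p := by linarith
      positivity)]
    exact intervalIntegral.integral_nonneg zero_le_one
      fun t _ => Real.rpow_nonneg (gpath_pos a b t).le _
  refine (intervalIntegral.abs_integral_le_integral_abs zero_le_one).trans (hol.trans ?_)
  refine mul_le_mul_of_nonneg_left ?_ (Real.rpow_nonneg hLnn _)
  refine Real.rpow_le_rpow (intervalIntegral.integral_nonneg zero_le_one fun t _ =>
    mul_nonneg (Real.rpow_nonneg (gpath_pos a b t).le _) (Real.rpow_nonneg (abs_nonneg _) _)) ?_
    (by positivity)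
  have hG : G a b α (3 * p) = ∫ t in (0:ℝ)..1, t ^ α * gpath a b t ^ (3 * p) := by
    rw [G]; congr 1; ext t; rw [gpath_rpow ha hb, mul_assoc]
  have hac : Continuous (fun t : ℝ => t ^ α) := continuous_id.rpow_const fun _ => Or.inr hα.1.le
  have hWc := gpath_rpow_cont a b (3 * p)
  have hGi : IntervalIntegrable (fun t : ℝ => t ^ α * gpath a b t ^ (3 * p)) volume 0 1 :=
    (hac.mul hWc).intervalIntegrable _ _
  have hfin : ∫ t in (0:ℝ)..1, gpath a b t ^ (3 * p) * (t ^ α * B + m * (1 - t ^ α) * A) =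
      m * (L (a ^ (3 * p)) (b ^ (3 * p)) - G a b α (3 * p)) * A + G a b α (3 * p) * B := by
    rw [hG, ← integral_gpath_rpow ha hab (by positivity),
      ← intervalIntegral.integral_sub (hWc.intervalIntegrable _ _)
        hGi,
      ← intervalIntegral.integral_const_mul, ← intervalIntegral.integral_mul_const,
      ← intervalIntegral.integral_mul_const, ← intervalIntegral.integral_add]
    · congr 1; ext t; ring
    · exact Continuous.intervalIntegrable (by fun_prop) _ _
    · exact Continuous.intervalIntegrable (by fun_prop) _ _
  rw [← hfin]
  refine intervalIntegral.integral_mono_on zero_le_one ?_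
    (Continuous.intervalIntegrable (by fun_prop) _ _) fun t ht =>
      mul_le_mul_of_nonneg_left (hcv t ht) (Real.rpow_nonneg (gpath_pos a b t).le _)
  refine IntervalIntegrable.continuousOn_mul ?_ hWc.continuousOn
  rw [intervalIntegrable_iff_integrableOn_Ioc_of_le zero_le_one]
  refine Integrable.of_bound (C := B + m * A)
    ((continuous_abs.measurable.comp hmeas).pow_const q).aestronglyMeasurable ?_
  filter_upwards [hae] with t ht
  obtain ⟨h0, h1⟩ := hta t ht
  have h5 : 0 ≤ |f' (gpath a b t)| ^ q := by positivity
  have := mul_nonneg hm0.le hA0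
  change ‖|f' (gpath a b t)| ^ q‖ ≤ _
  rw [Real.norm_of_nonneg h5]
  refine (hcv t ht).trans ?_
  nlinarith
end

section
/- Let f : [0,∞) → ℝ be differentiable with f' Lebesgue integrable on [a,b], where 0 < a < b < ∞. Let m ∈ (0,1], q > 1, and 0 < p < q. If |f'|^q is (1,m)-GA-convex on [0, max{a^{1/m}, b}], then |(b²·f(b) − a²·f(a))/2 − ∫_a^b x·f(x) dx| ≤ ((ln b − ln a)^{1−1/q}/2) · (1/(3p))^{1/q} · [L(a^{3(q−p)/(q−1)}, b^{3(q−p)/(q−1)})]^{1−1/q} · { m·[L(a^{3p}, b^{3p}) − a^{3p}]·|f'(a^{1/m})|^q + [b^{3p} − L(a^{3p}, b^{3p})]·|f'(b)|^q }^{1/q}. -/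
open Real MeasureTheory Set

theorem aux_holder_s11 (F H : ℝ → ℝ) (a b q : ℝ) (hab : a < b) (hq : 1 < q)
    (hF : ContinuousOn F (Icc a b)) (hH : ContinuousOn H (Icc a b))
    (hF0 : ∀ x ∈ Icc a b, 0 ≤ F x) (hH0 : ∀ x ∈ Icc a b, 0 ≤ H x) :
    ∫ x in a..b, F x * H x ≤
      (∫ x in a..b, F x ^ (q / (q - 1))) ^ (1 - 1 / q) * (∫ x in a..b, H x ^ q) ^ (1 / q) := by
  have mem : ∀ (K : ℝ → ℝ) (r : ENNReal), ContinuousOn K (Icc a b) →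
      MemLp K r (volume.restrict (Ioc a b)) := by
    intro K r hK
    obtain ⟨C, hC⟩ := isCompact_Icc.exists_bound_of_continuousOn hK
    refine MemLp.of_bound ((hK.mono Ioc_subset_Icc_self).aestronglyMeasurable measurableSet_Ioc) C ?_
    filter_upwards [ae_restrict_mem measurableSet_Ioc] with x hx
    exact hC x (Ioc_subset_Icc_self hx)
  have hq1 : q - 1 ≠ 0 := by linarith
  have hq0 : q ≠ 0 := by linarith
  have hc : (q / (q - 1)).HolderConjugate q := (Real.HolderConjugate.conjExponent hq).symm
  have e : 1 - 1 / q = 1 / (q / (q - 1)) := by field_simp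
  rw [e]
  simp only [intervalIntegral.integral_of_le hab.le]
  apply integral_mul_le_Lp_mul_Lq_of_nonneg hc _ _ (mem F _ hF) (mem H _ hH)
  · filter_upwards [ae_restrict_mem measurableSet_Ioc] with x hx
    exact hF0 x (Ioc_subset_Icc_self hx)
  · filter_upwards [ae_restrict_mem measurableSet_Ioc] with x hx
    exact hH0 x (Ioc_subset_Icc_self hx)

theorem aux_int1 (a b s : ℝ) (ha : 0 < a) (hab : a < b) (hs : 0 < s) :
    ∫ x in a..b, x ^ (s - 1) = (Real.log b - Real.log a) * L (a ^ s) (b ^ s) := by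
  have hD : 0 < Real.log b - Real.log a := sub_pos.2 (Real.log_lt_log ha hab)
  rw [integral_rpow (Or.inl (by linarith)), L, Real.log_rpow ha, Real.log_rpow (ha.trans hab),
    ← mul_sub]
  simp only [sub_add_cancel]
  field_simp

theorem aux_int2 (a b r A B : ℝ) (ha : 0 < a) (hab : a < b) (hr : 0 < r) :
    ∫ x in a..b, x ^ (r - 1) * (A * (1 - (Real.log x - Real.log a) / (Real.log b - Real.log a))
        + (Real.log x - Real.log a) / (Real.log b - Real.log a) * B) =
      1 / r * (A * (L (a ^ r) (b ^ r) - a ^ r) + (b ^ r - L (a ^ r) (b ^ r)) * B) := by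
  have hD : 0 < Real.log b - Real.log a := sub_pos.2 (Real.log_lt_log ha hab)
  have hb := ha.trans hab
  rw [intervalIntegral.integral_eq_sub_of_hasDerivAt (f := fun x => x ^ r / r *
    (A * (1 - (Real.log x - Real.log a) / (Real.log b - Real.log a))
        + (Real.log x - Real.log a) / (Real.log b - Real.log a) * B)
        - x ^ r / r ^ 2 * ((B - A) / (Real.log b - Real.log a)))]
  · rw [L, Real.log_rpow ha, Real.log_rpow hb, ← mul_sub]
    set D := Real.log b - Real.log a with hDdef
    simp only [sub_self]
    field_simp
    ring
  · intro x hx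
    rw [uIcc_of_le hab.le] at hx
    have hx0 : 0 < x := ha.trans_le hx.1
    have h1 : HasDerivAt (fun x : ℝ => x ^ r) (r * x ^ (r - 1)) x :=
      Real.hasDerivAt_rpow_const (Or.inl hx0.ne')
    have h2 : HasDerivAt (fun x => (Real.log x - Real.log a) / (Real.log b - Real.log a))
      (x⁻¹ / (Real.log b - Real.log a)) x :=
      ((Real.hasDerivAt_log hx0.ne').sub_const _).div_const _
    have h3 := ((h1.div_const r).mul (((h2.const_sub 1).const_mul A).add (h2.mul_const B))).sub
      ((h1.div_const (r ^ 2)).mul_const ((B - A) / (Real.log b - Real.log a)))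
    refine h3.congr_deriv ?_
    have e : x ^ r = x ^ (r - 1) * x := by
      rw [← Real.rpow_add_one hx0.ne']; simp
    simp only [Pi.add_apply, Pi.mul_apply]
    rw [e]
    field_simp
    ring
  · apply ContinuousOn.intervalIntegrable
    rw [uIcc_of_le hab.le]
    have hne : ∀ x ∈ Icc a b, x ≠ 0 := fun x hx => (ha.trans_le hx.1).ne'
    have hl : ContinuousOn Real.log (Icc a b) := Real.continuousOn_log.mono hne
    have hp : ContinuousOn (fun x : ℝ => x ^ (r - 1)) (Icc a b) :=
      fun x hx => (Real.continuousAt_rpow_const x _ (Or.inl (hne x hx))).continuousWithinAt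
    fun_prop

theorem stmt_11 (f f' : ℝ → ℝ) (a b m p q : ℝ) (ha : 0 < a) (hab : a < b)
    (hm : m ∈ Ioc (0:ℝ) 1) (hq : 1 < q) (hp : 0 < p) (hpq : p < q)
    (hderiv : ∀ x ∈ Ici (0:ℝ), HasDerivAt f (f' x) x)
    (hint : IntervalIntegrable f' volume a b)
    (hconv : GAConvexOn 1 m (max (a ^ (1/m)) b) (fun x => |f' x| ^ q)) :
    |(b ^ 2 * f b - a ^ 2 * f a) / 2 - ∫ x in a..b, x * f x| ≤
      ((Real.log b - Real.log a) ^ (1 - 1/q) / 2) * (1 / (3 * p)) ^ (1/q) *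
        L (a ^ (3 * (q - p) / (q - 1))) (b ^ (3 * (q - p) / (q - 1))) ^ (1 - 1/q) *
        (m * (L (a ^ (3 * p)) (b ^ (3 * p)) - a ^ (3 * p)) * |f' (a ^ (1/m))| ^ q +
          (b ^ (3 * p) - L (a ^ (3 * p)) (b ^ (3 * p))) * |f' b| ^ q) ^ (1/q) := by
  obtain ⟨hm0, hm1⟩ := hm
  have hb : 0 < b := ha.trans hab
  have hD : 0 < Real.log b - Real.log a := sub_pos.2 (Real.log_lt_log ha hab)
  have hq0 : 0 < q := by linarith
  have hq1 : 0 < q - 1 := by linarith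
  have hne : ∀ x ∈ Icc a b, x ≠ 0 := fun x hx => (ha.trans_le hx.1).ne'
  set u : ℝ → ℝ := fun x => (Real.log x - Real.log a) / (Real.log b - Real.log a) with hu
  set A := |f' (a ^ (1/m))| ^ q with hA
  set B := |f' b| ^ q with hB
  have hA0 : 0 ≤ A := by positivity
  have hB0 : 0 ≤ B := by positivity
  set W : ℝ → ℝ := fun x => (m * A) * (1 - u x) + u x * B with hW
  have hu0 : ∀ x ∈ Icc a b, 0 ≤ u x := fun x hx =>
    div_nonneg (sub_nonneg.2 (Real.log_le_log ha hx.1)) hD.le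
  have hu1 : ∀ x ∈ Icc a b, u x ≤ 1 := fun x hx => by
    have := Real.log_le_log (ha.trans_le hx.1) hx.2
    rw [hu]
    simp only
    rw [div_le_one hD]
    linarith
  have hW0 : ∀ x ∈ Icc a b, 0 ≤ W x := fun x hx => by
    have h1 := hu0 x hx
    have h2 := sub_nonneg.2 (hu1 x hx)
    simp only [hW]
    positivity
  have hbd : ∀ x ∈ Icc a b, |f' x| ≤ W x ^ (1 / q) := by
    intro x hx
    have hx0 := ha.trans_le hx.1
    have key := hconv b ⟨hb.le, le_max_right _ _⟩ (a ^ (1/m)) ⟨by positivity, le_max_left _ _⟩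
      (u x) ⟨hu0 x hx, hu1 x hx⟩
    have e : b ^ (u x) * (a ^ (1/m)) ^ (m * (1 - u x)) = x := by
      rw [← Real.rpow_mul ha.le, Real.rpow_def_of_pos hb, Real.rpow_def_of_pos ha, ← Real.exp_add]
      conv_rhs => rw [← Real.exp_log hx0]
      congr 1
      simp only [hu]
      field_simp
      ring
    simp only [e, Real.rpow_one] at key
    have key2 : |f' x| ^ q ≤ W x := by
      refine key.trans (le_of_eq ?_)
      simp only [hW]
      ring
    calc |f' x| = (|f' x| ^ q) ^ (1 / q) := by
          rw [← Real.rpow_mul (abs_nonneg _), mul_one_div_cancel hq0.ne', Real.rpow_one]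
      _ ≤ _ := Real.rpow_le_rpow (by positivity) key2 (by positivity)
  have hl : ContinuousOn Real.log (Icc a b) := Real.continuousOn_log.mono hne
  have hWc : ContinuousOn W (Icc a b) := by
    simp only [hW, hu]
    fun_prop
  have hWq : ContinuousOn (fun x => W x ^ (1 / q)) (Icc a b) :=
    hWc.rpow_const (fun x _ => Or.inr (by positivity))
  have hpc : ∀ s : ℝ, ContinuousOn (fun x : ℝ => x ^ s) (Icc a b) := fun s x hx =>
    (Real.continuousAt_rpow_const x _ (Or.inl (hne x hx))).continuousWithinAt
  have hfc : ContinuousOn f (uIcc a b) := fun x hx => by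
    rw [uIcc_of_le hab.le] at hx
    exact (hderiv x (ha.le.trans hx.1)).continuousAt.continuousWithinAt
  have i1 : IntervalIntegrable (fun x => x * f x) volume a b :=
    (continuousOn_id.mul hfc).intervalIntegrable
  have i2 : IntervalIntegrable (fun x => x ^ 2 * f' x) volume a b :=
    hint.continuousOn_mul (by fun_prop)
  have hid : (b ^ 2 * f b - a ^ 2 * f a) / 2 - ∫ x in a..b, x * f x
      = (∫ x in a..b, x ^ 2 * f' x) / 2 := by
    have := intervalIntegral.integral_eq_sub_of_hasDerivAt (a := a) (b := b)
      (f := fun x => x ^ 2 * f x / 2) (f' := fun x => x * f x + x ^ 2 * f' x / 2) (fun x hx => by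
        rw [uIcc_of_le hab.le] at hx
        refine (((hasDerivAt_pow 2 x).mul (hderiv x (ha.le.trans hx.1))).div_const 2).congr_deriv ?_
        simp
        ring) (i1.add (i2.div_const 2))
    rw [intervalIntegral.integral_add i1 (i2.div_const 2), intervalIntegral.integral_div] at this
    linarith
  have hbound : |∫ x in a..b, x ^ 2 * f' x| ≤ ∫ x in a..b, x ^ 2 * W x ^ (1 / q) := by
    rw [← Real.norm_eq_abs]
    refine intervalIntegral.norm_integral_le_of_norm_le hab.le ?_ ?_
    · refine Filter.Eventually.of_forall fun x hx => ?_
      rw [norm_mul, Real.norm_eq_abs, Real.norm_eq_abs, abs_of_nonneg (sq_nonneg x)]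
      exact mul_le_mul_of_nonneg_left (hbd x (Ioc_subset_Icc_self hx)) (sq_nonneg x)
    · apply ContinuousOn.intervalIntegrable
      rw [uIcc_of_le hab.le]
      fun_prop
  have hs : 0 < 3 * (q - p) / (q - 1) := div_pos (by linarith) hq1
  have hol := aux_holder_s11 (fun x => x ^ ((3 * (q - p) / (q - 1) - 1) * ((q - 1) / q)))
    (fun x => x ^ ((3 * p - 1) * (1 / q)) * W x ^ (1 / q)) a b q hab hq (hpc _)
    ((hpc _).mul hWq) (fun x hx => Real.rpow_nonneg (ha.le.trans hx.1) _)
    (fun x hx => mul_nonneg (Real.rpow_nonneg (ha.le.trans hx.1) _)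
      (Real.rpow_nonneg (hW0 x hx) _))
  have e0 : ∫ x in a..b, x ^ ((3 * (q - p) / (q - 1) - 1) * ((q - 1) / q)) *
      (x ^ ((3 * p - 1) * (1 / q)) * W x ^ (1 / q)) = ∫ x in a..b, x ^ 2 * W x ^ (1 / q) := by
    refine intervalIntegral.integral_congr fun x hx => ?_
    rw [uIcc_of_le hab.le] at hx
    have hx0 := ha.trans_le hx.1
    rw [← mul_assoc, ← Real.rpow_add hx0, ← Real.rpow_natCast x 2]
    congr 2
    push_cast
    field_simp
    ring
  have e1 : ∫ x in a..b, (x ^ ((3 * (q - p) / (q - 1) - 1) * ((q - 1) / q))) ^ (q / (q - 1))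
      = ∫ x in a..b, x ^ (3 * (q - p) / (q - 1) - 1) := by
    refine intervalIntegral.integral_congr fun x hx => ?_
    rw [uIcc_of_le hab.le] at hx
    have hx0 := ha.trans_le hx.1
    rw [← Real.rpow_mul hx0.le]
    congr 1
    field_simp
  have e2 : ∫ x in a..b, (x ^ ((3 * p - 1) * (1 / q)) * W x ^ (1 / q)) ^ q
      = ∫ x in a..b, x ^ (3 * p - 1) * W x := by
    refine intervalIntegral.integral_congr fun x hx => ?_
    rw [uIcc_of_le hab.le] at hx
    have hx0 := ha.trans_le hx.1
    rw [Real.mul_rpow (Real.rpow_nonneg hx0.le _) (Real.rpow_nonneg (hW0 x hx) _),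
      ← Real.rpow_mul hx0.le, ← Real.rpow_mul (hW0 x hx), mul_assoc,
      one_div_mul_cancel hq0.ne', mul_one, Real.rpow_one]
  have e3 := aux_int2 a b (3 * p) (m * A) B ha hab (by positivity)
  have e4 := aux_int1 a b _ ha hab hs
  have hint0 : 0 ≤ ∫ x in a..b, x ^ (3 * p - 1) * W x :=
    intervalIntegral.integral_nonneg hab.le fun x hx =>
      mul_nonneg (Real.rpow_nonneg (ha.le.trans hx.1) _) (hW0 x hx)
  have hL0 : 0 ≤ L (a ^ (3 * (q - p) / (q - 1))) (b ^ (3 * (q - p) / (q - 1))) := by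
    have h : 0 ≤ ∫ x in a..b, x ^ (3 * (q - p) / (q - 1) - 1) :=
      intervalIntegral.integral_nonneg hab.le fun x hx => Real.rpow_nonneg (ha.le.trans hx.1) _
    rw [e4] at h
    exact nonneg_of_mul_nonneg_right h hD
  change ∫ x in a..b, x ^ (3 * p - 1) * W x = _ at e3
  rw [e3] at hint0
  have hZ := nonneg_of_mul_nonneg_right hint0 (by positivity)
  simp only [e0, e1, e2] at hol
  rw [e3, e4, Real.mul_rpow hD.le hL0, Real.mul_rpow (by positivity) hZ] at hol
  rw [hid, abs_div, abs_two]
  have hf := hbound.trans hol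
  have e5 : m * (L (a ^ (3 * p)) (b ^ (3 * p)) - a ^ (3 * p)) * A =
    m * A * (L (a ^ (3 * p)) (b ^ (3 * p)) - a ^ (3 * p)) := by ring
  rw [e5]
  refine (div_le_div_of_nonneg_right hf zero_le_two).trans (le_of_eq ?_)
  ring
end

section
/- Let f, g : [0,∞) → [0,∞) with f·g Lebesgue integrable on [a,b], where 0 < a < b < ∞. Let q ≥ 1 and (α₁,m₁), (α₂,m₂) ∈ (0,1]². If f^q is (α₁,m₁)-GA-convex on [0, max{a^{1/m₁}, b}] and g^q is (α₂,m₂)-GA-convex on [0, max{a^{1/m₂}, b}], then ∫_a^b f(x)·g(x) dx ≤ (ln b − ln a) · [L(a,b)]^{1−1/q} · { m₁·m₂·[L(a,b) − G(α₁,1) − G(α₂,1) + G(α₁+α₂,1)]·f^q(a^{1/m₁})·g^q(a^{1/m₂}) + m₁·[G(α₂,1) − G(α₁+α₂,1)]·f^q(a^{1/m₁})·g^q(b) + m₂·[G(α₁,1) − G(α₁+α₂,1)]·f^q(b)·g^q(a^{1/m₂}) + G(α₁+α₂,1)·f^q(b)·g^q(b) }^{1/q}. -/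
open Real MeasureTheory Set

/-- The geometric path from `a` to `b`. -/
noncomputable def pathS (a b t : ℝ) : ℝ := a ^ (1 * (1 - t)) * b ^ (1 * t)

/-- Inverse of the geometric path. -/
noncomputable def invS (a b x : ℝ) : ℝ := (Real.log x - Real.log a) / (Real.log b - Real.log a)

lemma pathS_eq {a b : ℝ} (ha : 0 < a) (hb : 0 < b) (t : ℝ) :
    pathS a b t = Real.exp (Real.log a + t * (Real.log b - Real.log a)) := by
  unfold pathS
  rw [Real.rpow_def_of_pos ha, Real.rpow_def_of_pos hb, ← Real.exp_add]
  congr 1; ring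

lemma invS_pathS {a b : ℝ} (ha : 0 < a) (hab : a < b) (t : ℝ) :
    invS a b (pathS a b t) = t := by
  have hD : 0 < Real.log b - Real.log a := sub_pos.2 (Real.log_lt_log ha hab)
  rw [pathS_eq ha (ha.trans hab)]
  unfold invS
  rw [Real.log_exp, add_sub_cancel_left, mul_div_cancel_right₀ _ hD.ne']

lemma pathS_invS {a b x : ℝ} (ha : 0 < a) (hab : a < b) (hx : 0 < x) :
    pathS a b (invS a b x) = x := by
  have hD : 0 < Real.log b - Real.log a := sub_pos.2 (Real.log_lt_log ha hab)
  rw [pathS_eq ha (ha.trans hab)]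
  unfold invS
  rw [div_mul_cancel₀ _ hD.ne', add_sub_cancel, Real.exp_log hx]

lemma pathS_cont {a b : ℝ} (ha : 0 < a) (hab : a < b) : Continuous (pathS a b) := by
  have : pathS a b = fun t => Real.exp (Real.log a + t * (Real.log b - Real.log a)) :=
    funext fun t => pathS_eq ha (ha.trans hab) t
  rw [this]; fun_prop

lemma invS_mem {a b x : ℝ} (ha : 0 < a) (hab : a < b) (hx : x ∈ Icc a b) :
    invS a b x ∈ Icc (0:ℝ) 1 := by
  have hD : 0 < Real.log b - Real.log a := sub_pos.2 (Real.log_lt_log ha hab)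
  have h1 := Real.log_le_log ha hx.1
  have h2 := Real.log_le_log (ha.trans_le hx.1) hx.2
  unfold invS
  constructor
  · exact div_nonneg (by linarith) hD.le
  · rw [div_le_one hD]; linarith

lemma invS_cont {a b : ℝ} (ha : 0 < a) : ContinuousOn (invS a b) (Icc a b) := by
  unfold invS
  refine ContinuousOn.div_const (ContinuousOn.sub ?_ continuousOn_const) _
  exact Real.continuousOn_log.mono fun x hx => (ha.trans_le hx.1).ne'

lemma subst_int {a b : ℝ} (ha : 0 < a) (hab : a < b) (h : ℝ → ℝ) (hh : Continuous h) :
    ∫ x in a..b, h (invS a b x) =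
      (Real.log b - Real.log a) * ∫ t in (0:ℝ)..1, h t * pathS a b t := by
  have hb := ha.trans hab
  have hd : ∀ t, HasDerivAt (pathS a b) (pathS a b t * (Real.log b - Real.log a)) t := by
    intro t
    have : pathS a b = fun t => Real.exp (Real.log a + t * (Real.log b - Real.log a)) :=
      funext fun t => pathS_eq ha hb t
    rw [this]
    have h1 : HasDerivAt (fun t => Real.log a + t * (Real.log b - Real.log a))
        (Real.log b - Real.log a) t := by
      simpa using ((hasDerivAt_id t).mul_const (Real.log b - Real.log a)).const_add (Real.log a)
    exact h1.exp
  have h0 : pathS a b 0 = a := by simp [pathS]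
  have h1 : pathS a b 1 = b := by simp [pathS]
  have hi : ContinuousOn (fun x => h (invS a b x)) (pathS a b '' uIcc 0 1) := by
    rintro _ ⟨t, -, rfl⟩
    have hp : 0 < pathS a b t := by rw [pathS_eq ha hb]; exact Real.exp_pos _
    refine (ContinuousAt.comp (f := invS a b) hh.continuousAt ?_).continuousWithinAt
    unfold invS
    exact ((Real.continuousAt_log hp.ne').sub continuousAt_const).div_const _
  have key := intervalIntegral.integral_comp_mul_deriv'' (a := 0) (b := 1) (f := pathS a b)
    (f' := fun t => pathS a b t * (Real.log b - Real.log a)) (g := fun x => h (invS a b x))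
    (pathS_cont ha hab).continuousOn (fun t _ => (hd t).hasDerivWithinAt)
    ((pathS_cont ha hab).mul continuous_const).continuousOn hi
  rw [h0, h1] at key
  rw [← key, ← intervalIntegral.integral_const_mul]
  congr 1; ext t
  simp only [Function.comp, invS_pathS ha hab]; ring

lemma conv_bound {f : ℝ → ℝ} {a b q α m x : ℝ} (ha : 0 < a) (hab : a < b) (hm : m ∈ Ioc (0:ℝ) 1)
    (hx : x ∈ Icc a b) (h : GAConvexOn α m (max (a ^ (1/m)) b) (fun x => f x ^ q)) :
    f x ^ q ≤ invS a b x ^ α * f b ^ q + m * (1 - invS a b x ^ α) * f (a ^ (1/m)) ^ q := by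
  have hb := ha.trans hab
  have := h b ⟨hb.le, le_max_right _ _⟩ (a ^ (1/m)) ⟨(Real.rpow_pos_of_pos ha _).le, le_max_left _ _⟩
    (invS a b x) (invS_mem ha hab hx)
  have e : b ^ (invS a b x) * (a ^ (1/m)) ^ (m * (1 - invS a b x)) = x := by
    rw [← Real.rpow_mul ha.le, ← mul_assoc, one_div_mul_cancel hm.1.ne', mul_comm]
    have := pathS_invS ha hab (ha.trans_le hx.1)
    unfold pathS at this
    rw [one_mul (invS a b x)] at this
    exact this
  simp only [e] at this
  exact this

theorem stmt_12 (f g : ℝ → ℝ) (a b q α₁ m₁ α₂ m₂ : ℝ) (ha : 0 < a) (hab : a < b)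
    (hq : 1 ≤ q) (hα₁ : α₁ ∈ Ioc (0:ℝ) 1) (hm₁ : m₁ ∈ Ioc (0:ℝ) 1)
    (hα₂ : α₂ ∈ Ioc (0:ℝ) 1) (hm₂ : m₂ ∈ Ioc (0:ℝ) 1)
    (hf0 : ∀ x ∈ Ici (0:ℝ), 0 ≤ f x) (hg0 : ∀ x ∈ Ici (0:ℝ), 0 ≤ g x)
    (hfg : IntervalIntegrable (fun x => f x * g x) volume a b)
    (hfconv : GAConvexOn α₁ m₁ (max (a ^ (1/m₁)) b) (fun x => f x ^ q))
    (hgconv : GAConvexOn α₂ m₂ (max (a ^ (1/m₂)) b) (fun x => g x ^ q)) :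
    ∫ x in a..b, f x * g x ≤
      (Real.log b - Real.log a) * L a b ^ (1 - 1/q) *
        (m₁ * m₂ * (L a b - G a b α₁ 1 - G a b α₂ 1 + G a b (α₁ + α₂) 1) *
            f (a ^ (1/m₁)) ^ q * g (a ^ (1/m₂)) ^ q +
          m₁ * (G a b α₂ 1 - G a b (α₁ + α₂) 1) * f (a ^ (1/m₁)) ^ q * g b ^ q +
          m₂ * (G a b α₁ 1 - G a b (α₁ + α₂) 1) * f b ^ q * g (a ^ (1/m₂)) ^ q +
          G a b (α₁ + α₂) 1 * f b ^ q * g b ^ q) ^ (1/q) := by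
  have hb := ha.trans hab
  have hD : 0 < Real.log b - Real.log a := sub_pos.2 (Real.log_lt_log ha hab)
  have hq0 : 0 < q := by linarith
  obtain ⟨hα₁0, -⟩ := hα₁
  obtain ⟨hα₂0, -⟩ := hα₂
  have hFa : 0 ≤ f (a ^ (1/m₁)) ^ q :=
    Real.rpow_nonneg (hf0 _ (Real.rpow_pos_of_pos ha _).le) _
  have hGa : 0 ≤ g (a ^ (1/m₂)) ^ q :=
    Real.rpow_nonneg (hg0 _ (Real.rpow_pos_of_pos ha _).le) _
  have hFb : 0 ≤ f b ^ q := Real.rpow_nonneg (hf0 _ hb.le) _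
  have hGb : 0 ≤ g b ^ q := Real.rpow_nonneg (hg0 _ hb.le) _
  have bF := fun x hx => conv_bound (x := x) ha hab hm₁ hx hfconv
  have bG := fun x hx => conv_bound (x := x) ha hab hm₂ hx hgconv
  clear hfconv hgconv
  generalize f (a ^ (1/m₁)) ^ q = Fa at *
  generalize g (a ^ (1/m₂)) ^ q = Ga at *
  generalize f b ^ q = Fb at *
  generalize g b ^ q = Gb at *
  set P : ℝ → ℝ := fun t => (t ^ α₁ * Fb + m₁ * (1 - t ^ α₁) * Fa) *
    (t ^ α₂ * Gb + m₂ * (1 - t ^ α₂) * Ga) with hP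
  have c1 : Continuous fun t : ℝ => t ^ α₁ := Real.continuous_rpow_const hα₁0.le
  have c2 : Continuous fun t : ℝ => t ^ α₂ := Real.continuous_rpow_const hα₂0.le
  have c3 : Continuous fun t : ℝ => t ^ (α₁ + α₂) := Real.continuous_rpow_const (by linarith)
  have cp := pathS_cont ha hab
  have hPc : Continuous P := by fun_prop
  have hfac : ∀ t ∈ Icc (0:ℝ) 1, ∀ α m A B : ℝ, 0 < α → 0 < m → 0 ≤ A → 0 ≤ B →
      0 ≤ t ^ α * B + m * (1 - t ^ α) * A := by
    intro t ht α m A B hα hm hA hB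
    have h1 : 0 ≤ t ^ α := Real.rpow_nonneg ht.1 _
    have h2 : 0 ≤ 1 - t ^ α := sub_nonneg.2 (Real.rpow_le_one ht.1 ht.2 hα.le)
    positivity
  have hP0 : ∀ t ∈ Icc (0:ℝ) 1, 0 ≤ P t := fun t ht =>
    mul_nonneg (hfac t ht _ _ _ _ hα₁0 hm₁.1 hFa hFb) (hfac t ht _ _ _ _ hα₂0 hm₂.1 hGa hGb)
  have hL : L a b = ∫ t in (0:ℝ)..1, pathS a b t := by
    have := subst_int ha hab (fun _ => 1) continuous_const
    simp at this
    unfold L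
    rw [this, mul_div_cancel_left₀ _ hD.ne']
  have hG : ∀ α, G a b α 1 = ∫ t in (0:ℝ)..1, t ^ α * pathS a b t := by
    intro α; unfold G pathS; congr 1; ext t; ring
  have ii : ∀ {h : ℝ → ℝ}, Continuous h → IntervalIntegrable h volume 0 1 :=
    fun h => h.intervalIntegrable _ _
  have hB : m₁ * m₂ * (L a b - G a b α₁ 1 - G a b α₂ 1 + G a b (α₁ + α₂) 1) * Fa * Ga +
          m₁ * (G a b α₂ 1 - G a b (α₁ + α₂) 1) * Fa * Gb +
          m₂ * (G a b α₁ 1 - G a b (α₁ + α₂) 1) * Fb * Ga +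
          G a b (α₁ + α₂) 1 * Fb * Gb = ∫ t in (0:ℝ)..1, P t * pathS a b t := by
    have e : ∫ t in (0:ℝ)..1, P t * pathS a b t = ∫ t in (0:ℝ)..1,
        ((m₁ * m₂ * Fa * Ga) * pathS a b t
          + (m₂ * Fb * Ga - m₁ * m₂ * Fa * Ga) * (t ^ α₁ * pathS a b t)
          + (m₁ * Fa * Gb - m₁ * m₂ * Fa * Ga) * (t ^ α₂ * pathS a b t)
          + (m₁ * m₂ * Fa * Ga - m₁ * Fa * Gb - m₂ * Fb * Ga + Fb * Gb) *
            (t ^ (α₁ + α₂) * pathS a b t)) := by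
      apply intervalIntegral.integral_congr
      intro t ht
      rw [uIcc_of_le zero_le_one] at ht
      simp only [hP]
      rw [Real.rpow_add_of_nonneg ht.1 hα₁0.le hα₂0.le]
      ring
    rw [e, intervalIntegral.integral_add (ii (by fun_prop)) (ii (by fun_prop)),
      intervalIntegral.integral_add (ii (by fun_prop)) (ii (by fun_prop)),
      intervalIntegral.integral_add (ii (by fun_prop)) (ii (by fun_prop))]
    simp only [intervalIntegral.integral_const_mul]
    rw [← hL, ← hG, ← hG, ← hG]
    ring
  rw [hB]
  have hLpos : 0 < L a b := div_pos (sub_pos.2 hab) hD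
  have hDL : b - a = (Real.log b - Real.log a) * L a b := by
    unfold L; rw [mul_div_cancel₀ _ hD.ne']
  set B := ∫ t in (0:ℝ)..1, P t * pathS a b t with hBdef
  have hI := subst_int ha hab P hPc
  rw [← hBdef] at hI
  have hB0 : 0 ≤ B := by
    apply intervalIntegral.integral_nonneg zero_le_one
    intro t ht
    refine mul_nonneg (hP0 t ht) ?_
    rw [pathS_eq ha hb]; positivity
  have hPi : ContinuousOn (fun x => P (invS a b x)) (Icc a b) :=
    hPc.comp_continuousOn (invS_cont ha)
  have hPr : ContinuousOn (fun x => P (invS a b x) ^ (1/q)) (Icc a b) :=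
    (Real.continuous_rpow_const (by positivity)).comp_continuousOn hPi
  have step1 : ∫ x in a..b, f x * g x ≤ ∫ x in a..b, P (invS a b x) ^ (1/q) := by
    apply intervalIntegral.integral_mono_on hab.le hfg
    · exact ContinuousOn.intervalIntegrable (by rwa [uIcc_of_le hab.le])
    · intro x hx
      have hx0 : 0 ≤ x := ha.le.trans hx.1
      have h1 := hf0 x hx0
      have h2 := hg0 x hx0
      have h3 : (f x * g x) ^ q ≤ P (invS a b x) := by
        rw [Real.mul_rpow h1 h2]
        exact mul_le_mul (bF x hx) (bG x hx) (Real.rpow_nonneg h2 _)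
          (hfac _ (invS_mem ha hab hx) _ _ _ _ hα₁0 hm₁.1 hFa hFb)
      calc f x * g x = ((f x * g x) ^ q) ^ (1/q) := by
            rw [← Real.rpow_mul (mul_nonneg h1 h2), mul_one_div_cancel hq0.ne', Real.rpow_one]
        _ ≤ _ := Real.rpow_le_rpow (Real.rpow_nonneg (mul_nonneg h1 h2) _) h3 (by positivity)
  have step2 := ConcaveOn.le_map_set_average (μ := volume) (t := Icc a b) (s := Ici (0:ℝ))
    (f := fun x => P (invS a b x))
    (Real.concaveOn_rpow (p := 1/q) (by positivity) (by rw [div_le_one hq0]; exact hq))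
    (Real.continuous_rpow_const (by positivity)).continuousOn isClosed_Ici
    (by simp [hab]) (by simp)
    ((ae_restrict_mem measurableSet_Icc).mono fun x hx => hP0 _ (invS_mem ha hab hx))
    (hPi.integrableOn_compact isCompact_Icc)
    (hPr.integrableOn_compact isCompact_Icc)
  rw [setAverage_eq, setAverage_eq, integral_Icc_eq_integral_Ioc, integral_Icc_eq_integral_Ioc,
    ← intervalIntegral.integral_of_le hab.le, ← intervalIntegral.integral_of_le hab.le, hI,
    Real.volume_real_Icc_of_le hab.le, hDL,
    smul_eq_mul, smul_eq_mul, inv_mul_le_iff₀ (by positivity)] at step2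
  refine step1.trans (step2.trans (le_of_eq ?_))
  have e2 : ((Real.log b - Real.log a) * L a b)⁻¹ * ((Real.log b - Real.log a) * B) = B / L a b := by
    rw [← div_eq_inv_mul, mul_div_mul_left _ _ hD.ne']
  rw [e2, Real.div_rpow hB0 hLpos.le, Real.rpow_sub hLpos, Real.rpow_one]
  ring
end

section
/- Let f, g : [0,∞) → [0,∞) with f·g Lebesgue integrable on [a,b], where 0 < a < b < ∞. Let (α₁,m₁), (α₂,m₂) ∈ (0,1]². If f is (α₁,m₁)-GA-convex on [0, max{a^{1/m₁}, b}] and g is (α₂,m₂)-GA-convex on [0, max{a^{1/m₂}, b}], then ∫_a^b f(x)·g(x) dx ≤ (ln b − ln a) · { m₁·m₂·[L(a,b) − G(α₁,1) − G(α₂,1) + G(α₁+α₂,1)]·f(a^{1/m₁})·g(a^{1/m₂}) + m₁·[G(α₂,1) − G(α₁+α₂,1)]·f(a^{1/m₁})·g(b) + m₂·[G(α₁,1) − G(α₁+α₂,1)]·f(b)·g(a^{1/m₂}) + G(α₁+α₂,1)·f(b)·g(b) }. -/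
open Real MeasureTheory Set

theorem ga_pointwise (f : ℝ → ℝ) (a b α m t : ℝ) (ha : 0 < a) (hab : a < b)
    (hm : m ∈ Ioc (0:ℝ) 1) (h : GAConvexOn α m (max (a ^ (1/m)) b) f)
    (ht : t ∈ Icc (0:ℝ) 1) :
    f (a ^ (1 * (1 - t)) * b ^ (1 * t)) ≤ t ^ α * f b + m * (1 - t ^ α) * f (a ^ (1/m)) := by
  have hm0 : m ≠ 0 := hm.1.ne'
  have h1 := h b ⟨(ha.trans hab).le, le_max_right _ _⟩ (a ^ (1/m))
    ⟨(rpow_pos_of_pos ha _).le, le_max_left _ _⟩ t ht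
  rw [← rpow_mul ha.le] at h1
  have e : 1 / m * (m * (1 - t)) = 1 * (1 - t) := by field_simp
  rw [e] at h1
  rw [mul_comm, one_mul t]
  exact h1

theorem stmt_13 (f g : ℝ → ℝ) (a b α₁ m₁ α₂ m₂ : ℝ) (ha : 0 < a) (hab : a < b)
    (hα₁ : α₁ ∈ Ioc (0:ℝ) 1) (hm₁ : m₁ ∈ Ioc (0:ℝ) 1)
    (hα₂ : α₂ ∈ Ioc (0:ℝ) 1) (hm₂ : m₂ ∈ Ioc (0:ℝ) 1)
    (hf0 : ∀ x ∈ Ici (0:ℝ), 0 ≤ f x) (hg0 : ∀ x ∈ Ici (0:ℝ), 0 ≤ g x)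
    (hfg : IntervalIntegrable (fun x => f x * g x) volume a b)
    (hfconv : GAConvexOn α₁ m₁ (max (a ^ (1/m₁)) b) f)
    (hgconv : GAConvexOn α₂ m₂ (max (a ^ (1/m₂)) b) g) :
    ∫ x in a..b, f x * g x ≤
      (Real.log b - Real.log a) *
        (m₁ * m₂ * (L a b - G a b α₁ 1 - G a b α₂ 1 + G a b (α₁ + α₂) 1) *
            f (a ^ (1/m₁)) * g (a ^ (1/m₂)) +
          m₁ * (G a b α₂ 1 - G a b (α₁ + α₂) 1) * f (a ^ (1/m₁)) * g b +
          m₂ * (G a b α₁ 1 - G a b (α₁ + α₂) 1) * f b * g (a ^ (1/m₂)) +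
          G a b (α₁ + α₂) 1 * f b * g b) := by
  have hb : 0 < b := ha.trans hab
  have hK : 0 < Real.log b - Real.log a := sub_pos.2 (Real.log_lt_log ha hab)
  obtain ⟨A, hA⟩ : ∃ A, A = f (a ^ (1/m₁)) := ⟨_, rfl⟩
  obtain ⟨B, hB⟩ : ∃ B, B = g (a ^ (1/m₂)) := ⟨_, rfl⟩
  obtain ⟨K, hKd⟩ : ∃ K, K = Real.log b - Real.log a := ⟨_, rfl⟩
  rw [← hKd] at hK
  let w : ℝ → ℝ := fun t => a ^ (1 * (1 - t)) * b ^ (1 * t)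
  let F : ℝ → ℝ := fun t => (t ^ α₁ * f b + m₁ * (1 - t ^ α₁) * A) *
    (t ^ α₂ * g b + m₂ * (1 - t ^ α₂) * B)
  let τ : ℝ → ℝ := fun x => (Real.log x - Real.log a) / K
  have hw : ∀ t, w t = a * Real.exp (K * t) := by
    intro t
    simp only [w]
    rw [rpow_def_of_pos ha, rpow_def_of_pos hb, ← Real.exp_add]
    nth_rewrite 2 [← Real.exp_log ha]
    rw [← Real.exp_add, hKd]
    congr 1; ring
  have hwpos : ∀ t, 0 < w t := fun t => by rw [hw]; positivity
  have hτw : ∀ t, τ (w t) = t := by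
    intro t
    simp only [τ]
    rw [hw, Real.log_mul ha.ne' (Real.exp_pos _).ne', Real.log_exp]
    field_simp; ring
  have hwτ : ∀ x, 0 < x → w (τ x) = x := by
    intro x hx
    rw [hw]
    simp only [τ]
    rw [mul_div_cancel₀ _ hK.ne', Real.exp_sub, Real.exp_log hx, Real.exp_log ha]
    field_simp
  have hwc : Continuous w := by
    have : w = fun t => a * Real.exp (K * t) := funext hw
    rw [this]; fun_prop
  have hwd : ∀ t, HasDerivAt w (w t * K) t := by
    intro t
    have h1 : HasDerivAt (fun t => a * Real.exp (K * t)) (a * (Real.exp (K * t) * (K * 1))) t :=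
      (((hasDerivAt_id t).const_mul K).exp).const_mul a
    have : w = fun t => a * Real.exp (K * t) := funext hw
    rw [this]
    convert h1 using 1
    ring
  have hw0 : w 0 = a := by simp [w]
  have hw1 : w 1 = b := by simp [w]
  have hpc : ∀ s : ℝ, 0 < s → Continuous (fun t : ℝ => t ^ s) := fun s hs =>
    Real.continuous_rpow_const hs.le
  have c1 := hpc α₁ hα₁.1
  have c2 := hpc α₂ hα₂.1
  have c3 := hpc (α₁ + α₂) (add_pos hα₁.1 hα₂.1)
  have hFc : Continuous F := by simp only [F]; fun_prop
  have hτc : ContinuousOn τ (Ioi 0) := by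
    simp only [τ]
    exact ((Real.continuousOn_log.mono (fun x hx => ne_of_gt hx)).sub continuousOn_const).div_const _
  have hFτ : ContinuousOn (fun x => F (τ x)) (Ioi 0) := hFc.comp_continuousOn hτc
  -- change of variables
  have hcv : ∀ φ : ℝ → ℝ, ContinuousOn φ (Ioi 0) →
      ∫ t in (0:ℝ)..1, φ (w t) * (w t * K) = ∫ x in a..b, φ x := by
    intro φ hφ
    have := intervalIntegral.integral_comp_mul_deriv' (a := 0) (b := 1) (f := w)
      (f' := fun t => w t * K) (g := φ) (fun t _ => hwd t)
      (hwc.mul continuous_const).continuousOn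
      (hφ.mono (by rintro _ ⟨t, _, rfl⟩; exact hwpos t))
    rw [hw0, hw1] at this
    exact this
  have hle : ∫ x in a..b, f x * g x ≤ ∫ x in a..b, F (τ x) := by
    apply intervalIntegral.integral_mono_on hab.le hfg
    · apply ContinuousOn.intervalIntegrable
      rw [uIcc_of_le hab.le]
      exact hFτ.mono (fun x hx => lt_of_lt_of_le ha hx.1)
    · intro x hx
      have hx0 : 0 < x := lt_of_lt_of_le ha hx.1
      have hτ : τ x ∈ Icc (0:ℝ) 1 := by
        simp only [τ]
        have h1 := Real.log_le_log ha hx.1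
        have h2 := Real.log_le_log hx0 hx.2
        constructor
        · exact div_nonneg (by linarith) hK.le
        · rw [div_le_one hK]; linarith
      have p1 := ga_pointwise f a b α₁ m₁ (τ x) ha hab hm₁ hfconv hτ
      have p2 := ga_pointwise g a b α₂ m₂ (τ x) ha hab hm₂ hgconv hτ
      have e : a ^ (1 * (1 - τ x)) * b ^ (1 * τ x) = x := hwτ x hx0
      rw [e] at p1 p2
      rw [← hA] at p1
      rw [← hB] at p2
      exact mul_le_mul p1 p2 (hg0 x hx0.le) ((hf0 x hx0.le).trans p1)
  refine hle.trans (le_of_eq ?_)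
  rw [← hcv _ hFτ, ← hA, ← hB, ← hKd]
  have hL : L a b = ∫ t in (0:ℝ)..1, w t := by
    have := hcv (fun _ => 1) continuousOn_const
    simp only [one_mul, intervalIntegral.integral_mul_const, intervalIntegral.integral_const,
      smul_eq_mul, mul_one] at this
    rw [L, ← hKd, ← this]
    field_simp
  have hG : ∀ s, G a b s 1 = ∫ t in (0:ℝ)..1, t ^ s * w t := by
    intro s
    simp only [G, w, mul_assoc]
  have i0 : IntervalIntegrable w volume 0 1 := hwc.intervalIntegrable _ _
  have i1 : IntervalIntegrable (fun t => t ^ α₁ * w t) volume 0 1 :=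
    (c1.mul hwc).intervalIntegrable _ _
  have i2 : IntervalIntegrable (fun t => t ^ α₂ * w t) volume 0 1 :=
    (c2.mul hwc).intervalIntegrable _ _
  have i3 : IntervalIntegrable (fun t => t ^ (α₁ + α₂) * w t) volume 0 1 :=
    (c3.mul hwc).intervalIntegrable _ _
  have hexp : ∫ t in (0:ℝ)..1, F (τ (w t)) * (w t * K) =
      ∫ t in (0:ℝ)..1, (K * (m₁ * m₂ * A * B) * w t
        + K * (m₂ * f b * B - m₁ * m₂ * A * B) * (t ^ α₁ * w t)
        + K * (m₁ * A * g b - m₁ * m₂ * A * B) * (t ^ α₂ * w t)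
        + K * (m₁ * m₂ * A * B - m₁ * A * g b - m₂ * f b * B + f b * g b)
          * (t ^ (α₁ + α₂) * w t)) := by
    apply intervalIntegral.integral_congr
    intro t ht
    rw [uIcc_of_le zero_le_one] at ht
    simp only [hτw, F]
    rw [Real.rpow_add_of_nonneg ht.1 hα₁.1.le hα₂.1.le]
    ring
  rw [hexp, intervalIntegral.integral_add (((i0.const_mul _).add (i1.const_mul _)).add
      (i2.const_mul _)) (i3.const_mul _),
    intervalIntegral.integral_add ((i0.const_mul _).add (i1.const_mul _)) (i2.const_mul _),
    intervalIntegral.integral_add (i0.const_mul _) (i1.const_mul _)]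
  simp only [intervalIntegral.integral_const_mul]
  rw [← hL, ← hG, ← hG, ← hG]
  ring
end

section
/- Let f, g : [0,∞) → [0,∞) with f·g Lebesgue integrable on [a,b], where 0 < a < b < ∞. If f and g are both (1,1)-GA-convex on [0,b] (i.e. GA-convex), then ∫_a^b f(x)·g(x) dx ≤ (1/(ln b − ln a)) · { [2·L(a,b) − a·(ln b − ln a) − 2a]·f(a)·g(a) + [a + b − 2·L(a,b)]·[f(a)·g(b) + f(b)·g(a)] + [2·L(a,b) + b·(ln b − ln a) − 2b]·f(b)·g(b) }. -/
open Real MeasureTheory Set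

theorem ga_bound (f : ℝ → ℝ) (a b : ℝ) (ha : 0 < a) (hab : a < b)
    (hf : GAConvexOn 1 1 b f) (x : ℝ) (hx : x ∈ Icc a b) :
    f x ≤ ((Real.log b - Real.log x) * f a + (Real.log x - Real.log a) * f b)
      / (Real.log b - Real.log a) := by
  have hb : 0 < b := ha.trans hab
  have hx0 : 0 < x := ha.trans_le hx.1
  have hD : 0 < Real.log b - Real.log a := sub_pos.2 (Real.log_lt_log ha hab)
  have h1 := Real.log_le_log ha hx.1
  have h2 := Real.log_le_log hx0 hx.2
  have h := hf a ⟨ha.le, hab.le⟩ b ⟨hb.le, le_rfl⟩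
    ((Real.log b - Real.log x) / (Real.log b - Real.log a))
    ⟨div_nonneg (by linarith) hD.le, (div_le_one hD).2 (by linarith)⟩
  have e : a ^ ((Real.log b - Real.log x) / (Real.log b - Real.log a)) *
      b ^ (1 * (1 - (Real.log b - Real.log x) / (Real.log b - Real.log a))) = x := by
    rw [Real.rpow_def_of_pos ha, Real.rpow_def_of_pos hb, ← Real.exp_add]
    rw [← Real.exp_log hx0]
    congr 1
    rw [Real.exp_log hx0]
    field_simp
    ring
  rw [e] at h
  refine h.trans (le_of_eq ?_)
  rw [Real.rpow_one]
  field_simp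
  ring

theorem stmt_14 (f g : ℝ → ℝ) (a b : ℝ) (ha : 0 < a) (hab : a < b)
    (hf0 : ∀ x ∈ Ici (0:ℝ), 0 ≤ f x) (hg0 : ∀ x ∈ Ici (0:ℝ), 0 ≤ g x)
    (hfg : IntervalIntegrable (fun x => f x * g x) volume a b)
    (hfconv : GAConvexOn 1 1 b f) (hgconv : GAConvexOn 1 1 b g) :
    ∫ x in a..b, f x * g x ≤
      (1 / (Real.log b - Real.log a)) *
        ((2 * L a b - a * (Real.log b - Real.log a) - 2 * a) * f a * g a +
          (a + b - 2 * L a b) * (f a * g b + f b * g a) +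
          (2 * L a b + b * (Real.log b - Real.log a) - 2 * b) * f b * g b) := by
  have hb : 0 < b := ha.trans hab
  have hD : 0 < Real.log b - Real.log a := sub_pos.2 (Real.log_lt_log ha hab)
  have hne : ∀ x ∈ uIcc a b, x ≠ 0 := by
    intro x hx
    rw [uIcc_of_le hab.le] at hx
    exact (ha.trans_le hx.1).ne'
  have hcont : ContinuousOn (fun x =>
      (((Real.log b - Real.log x) * f a + (Real.log x - Real.log a) * f b)
        / (Real.log b - Real.log a)) *
      (((Real.log b - Real.log x) * g a + (Real.log x - Real.log a) * g b)
        / (Real.log b - Real.log a))) (uIcc a b) := by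
    have hl : ContinuousOn Real.log (uIcc a b) := fun x hx =>
      (Real.continuousAt_log (hne x hx)).continuousWithinAt
    fun_prop
  have hint := hcont.intervalIntegrable (μ := volume)
  refine (intervalIntegral.integral_mono_on hab.le hfg hint ?_).trans (le_of_eq ?_)
  · intro x hx
    have hx0 : 0 ≤ x := ha.le.trans hx.1
    have h1 := ga_bound f a b ha hab hfconv x hx
    have h2 := ga_bound g a b ha hab hgconv x hx
    exact mul_le_mul h1 h2 (hg0 x hx0) ((hf0 x hx0).trans h1)
  · rw [intervalIntegral.integral_eq_sub_of_hasDerivAt (f := fun x =>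
      (x * ((Real.log b - Real.log x) ^ 2 + 2 * (Real.log b - Real.log x) + 2) * (f a * g a)
      + x * ((Real.log b - Real.log x) * (Real.log x - Real.log a) - (Real.log b - Real.log x)
          + (Real.log x - Real.log a) - 2) * (f a * g b + f b * g a)
      + x * ((Real.log x - Real.log a) ^ 2 - 2 * (Real.log x - Real.log a) + 2) * (f b * g b))
      / (Real.log b - Real.log a) ^ 2) ?_ hint]
    · unfold L
      field_simp
      ring
    · intro x hx
      have hx0 := hne x hx
      have hl := Real.hasDerivAt_log hx0
      have hi := hasDerivAt_id' x
      have hu := hl.const_sub (Real.log b)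
      have hv := hl.sub_const (Real.log a)
      have A := (hi.mul (((hu.pow 2).add (hu.const_mul 2)).add_const 2)).mul_const (f a * g a)
      have B := (hi.mul ((((hu.mul hv).sub hu).add hv).sub_const 2)).mul_const
        (f a * g b + f b * g a)
      have C := (hi.mul (((hv.pow 2).sub (hv.const_mul 2)).add_const 2)).mul_const (f b * g b)
      refine (((A.add B).add C).div_const ((Real.log b - Real.log a) ^ 2)).congr_deriv ?_
      simp only [Pi.add_apply, Pi.mul_apply, Pi.sub_apply, Pi.pow_apply]
      field_simp
      push_cast
      ring
end
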